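/- arXiv:0803.1109 — 2 statements merged into one kernel-verified Lean document; each statement's English description precedes it below -/
import Mathlib

section
/- For every integer n ≥ 3, one has n/φ(n) ≤ e^γ · log(log φ(n)) + (3 − e^γ · log(log 2)), with equality for n = 6 (the constant 3 − e^γ·log(log 2) equals 3.65278…). -/
open Real

/-!
Among the integers with `k` prime factors, the product of the first `k` primes has the largest
ratio `n/φ(n)`, and the product of `p - 1` over those primes is a lower bound for `φ(n)`
(`exists_primorial_compare`). Since the right-hand side increases with `φ(n)`, it suffices to
bound the Mertens product `P(x) = ∏_{p ≤ x} (1 - 1/p)⁻¹` by `e^γ log log Φ(x)` plus the constant,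
where `x` is prime and `Φ(x) = ∏_{p ≤ x} (p - 1)`.

For large `x` this needs an explicit upper bound for `P(x)` with the exact constant `e^γ`
(`lzSum_zero_le`). The Euler product gives `∑ Λ(n)/(n^{1+s} log n) ≤ log (1 + 1/s)` for every
`s > 0`. Mertens' lower bound `∑_{n ≤ t} Λ(n)/n ≥ log t - 1`, summed by parts along the geometric
grid `t_j = x^{j/K}`, bounds the tail `n > x` from below by a tail of the logarithmic series for
`-log (1 - y)`, with `y = x^{-s/K}`; what remains after `s → 0` and `K → ∞` is
`log log x + lim (H_K - log K) = log log x + γ`. The error is at most about `ψ(x)/(x log x)`, because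
`∑_{n ≤ x} Λ(n)/n ≤ log x - 1 + ψ(x)/x` up to smaller terms. Hence, with `c = θ(x)/x`,
`P(x)` is at most about `e^γ (log x + c)`, while `log log Φ(x)` is about `log x + log c`. No form of
the prime number theorem is needed: `c - log c` stays small enough for every `c` allowed by
Chebyshev's bounds (`chebyshev_range_ineq`), and `mertensProd_le_of_large` covers `x ≥ 8192`.

For `8 ≤ x < 8192`, each interval `[2^i, 2^(i+1))` is settled by exact integer arithmetic, from a
lower bound for `Φ(2^i)` by a power of two and an upper bound for `P(2^(i+1))` (`finite_check`);
the primes below `8` are evaluated directly.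
-/

/-! ### The Dirichlet series of `log ζ` and its Euler product -/

/-- Partial sums `∑_{n ≤ M} Λ(n)/n`. -/
noncomputable def lamSum (M : ℕ) : ℝ :=
  ∑ n ∈ Finset.Ioc 0 M, ArithmeticFunction.vonMangoldt n / n

/-- The weight `t^{-s} / log t`. -/
noncomputable def wt (s t : ℝ) : ℝ := t ^ (-s) / Real.log t

/-- Partial sums `∑_{n ≤ M} Λ(n) / (n^{1+s} log n)` of the Dirichlet series of `log ζ(1+s)`; the
term `n = 1` vanishes because `Λ 1 = 0`. -/
noncomputable def lzSum (s : ℝ) (M : ℕ) : ℝ :=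
  ∑ n ∈ Finset.Ioc 0 M, ArithmeticFunction.vonMangoldt n / n * wt s n

open ArithmeticFunction in
theorem sum_vonMangoldt_mul (N : ℕ) (h : ℕ → ℝ) :
    ∑ n ∈ Finset.Ioc 0 N, vonMangoldt n * h n =
      ∑ p ∈ Nat.primesLE N, ∑ k ∈ Finset.Icc 1 (Nat.log p N), Real.log p * h (p ^ k) := by
  calc
  _ = ∑ m ∈ ((Finset.Icc 1 N).filter Nat.Prime).biUnion
        fun p ↦ Finset.image (p ^ ·) (Finset.Icc 1 (Nat.log p N)), vonMangoldt m * h m := by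
    refine (Finset.sum_subset (fun q hq ↦ ?_) fun x hx ↦ ?_).symm
    · simp only [Finset.mem_biUnion, Finset.mem_filter, Finset.mem_Icc, Finset.mem_image,
        Finset.mem_Ioc] at hq ⊢
      obtain ⟨p, ⟨_, hp⟩, k, ⟨_, hk⟩, rfl⟩ := hq
      exact ⟨pow_pos hp.pos _, Nat.pow_le_of_le_log (by lia) hk⟩
    · intro hx2
      suffices vonMangoldt x = 0 by rw [this, zero_mul]
      revert hx2
      simp only [Finset.mem_biUnion, Finset.mem_filter, Finset.mem_Icc, Finset.mem_image,
        not_exists, not_and, and_imp, vonMangoldt_eq_zero_iff, isPrimePow_nat_iff]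
      contrapose!
      rintro ⟨p, k, hp, hk, rfl⟩
      simp only [Finset.mem_Ioc] at hx
      have hpn : p ≤ N := (Nat.le_of_dvd (by lia) (dvd_pow_self p hk.ne')).trans hx.2
      exact ⟨p, ⟨hp.one_le, hpn, hp, ⟨k, ⟨by lia, Nat.le_log_of_pow_le hp.one_lt hx.2, rfl⟩⟩⟩⟩
  _ = ∑ p ∈ Finset.Icc 1 N with p.Prime,
        ∑ q ∈ Finset.image (fun k ↦ p ^ k) (Finset.Icc 1 (Nat.log p N)), vonMangoldt q * h q := by
      rw [Finset.sum_biUnion <| by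
        rw [Finset.pairwiseDisjoint_iff]; grind [Nat.Prime.pow_inj']]
  _ = ∑ p ∈ Nat.primesLE N, ∑ k ∈ Finset.Icc 1 (Nat.log p N), vonMangoldt (p ^ k) * h (p ^ k) := by
      refine Finset.sum_congr (Nat.primesLE_eq_filter_Icc_one N).symm fun p hp ↦ ?_
      exact Finset.sum_image fun a _ b _ hab ↦
        Nat.pow_right_injective (Nat.two_le_of_mem_primesLE hp) hab
  _ = _ := by
      refine Finset.sum_congr rfl fun p hp ↦ Finset.sum_congr rfl fun k hk ↦ ?_
      rw [vonMangoldt_apply_pow (by grind), vonMangoldt_apply_prime <| Nat.prime_of_mem_primesLE hp]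

theorem lzSum_eq (s : ℝ) (N : ℕ) :
    lzSum s N = ∑ p ∈ Nat.primesLE N,
      ∑ k ∈ Finset.range (Nat.log p N), ((p : ℝ) ^ (-(1 + s))) ^ (k + 1) / ((k : ℝ) + 1) := by
  have h1 : lzSum s N = ∑ n ∈ Finset.Ioc 0 N, ArithmeticFunction.vonMangoldt n *
      (fun m : ℕ ↦ wt s m / m) n := by
    unfold lzSum
    exact Finset.sum_congr rfl fun n _ ↦ by ring
  rw [h1, sum_vonMangoldt_mul]
  refine Finset.sum_congr rfl fun p hp ↦ ?_
  have hp1 : (1 : ℝ) < p := by exact_mod_cast Nat.one_lt_of_mem_primesLE hp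
  have hp0 : (0 : ℝ) < p := by linarith
  have hl : 0 < Real.log p := Real.log_pos hp1
  rw [← Finset.Ico_add_one_right_eq_Icc, Finset.sum_Ico_eq_sum_range]
  simp only [Nat.add_sub_cancel]
  refine Finset.sum_congr rfl fun k _ ↦ ?_
  have h2 : ((p : ℝ) ^ (-(1 + s))) ^ (k + 1) = ((p : ℝ) ^ (k + 1)) ^ (-s) / (p : ℝ) ^ (k + 1) := by
    rw [neg_add, Real.rpow_add hp0, mul_pow, ← Real.rpow_natCast, ← Real.rpow_natCast,
      ← Real.rpow_natCast, ← Real.rpow_mul hp0.le, ← Real.rpow_mul hp0.le, ← Real.rpow_mul hp0.le,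
      div_eq_mul_inv, ← Real.rpow_neg hp0.le, mul_comm]
    congr 2 <;> ring
  rw [h2, add_comm 1 k]
  unfold wt
  push_cast
  rw [Real.log_pow]
  push_cast
  field_simp

/-- `∑_n n^{-1-s} ≤ 1 + 1/s`, combined with the Euler product. -/
theorem prod_euler_le {s : ℝ} (hs : 0 < s) (N : ℕ) :
    ∏ p ∈ Nat.primesLE N, (1 - (p : ℝ) ^ (-(1 + s)))⁻¹ ≤ 1 + 1 / s := by
  let f : ℕ →* ℝ :=
    { toFun := fun n ↦ (n : ℝ) ^ (-(1 + s))
      map_one' := by simp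
      map_mul' := fun a b ↦ by
        push_cast
        exact Real.mul_rpow (Nat.cast_nonneg _) (Nat.cast_nonneg _) }
  have hf : ∀ n : ℕ, f n = (n : ℝ) ^ (-(1 + s)) := fun _ ↦ rfl
  have hsum : Summable f := by
    have := Real.summable_nat_rpow (p := -(1 + s))
    exact this.2 (by linarith)
  have h0 : ∀ n, 0 ≤ f n := fun n ↦ Real.rpow_nonneg (Nat.cast_nonneg _) _
  have h1 := EulerProduct.prod_primesBelow_geometric_eq_tsum_smoothNumbers hsum (N + 1)
  simp only [hf] at h1
  rw [Nat.primesLE, h1]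
  have h2 := hsum.tsum_subtype_le (fun n ↦ f n) ((N + 1).smoothNumbers) h0 
  refine h2.trans ?_
  rw [hsum.tsum_eq_zero_add]
  have h3 := ZetaAsymptotics.zeta_limit_aux1 (s := 1 + s) (by linarith)
  have h4 : 0 ≤ ZetaAsymptotics.termTSum (1 + s) :=
    tsum_nonneg fun n ↦ ZetaAsymptotics.term_nonneg _ _
  have h5 : ∑' n : ℕ, f (n + 1) = ∑' n : ℕ, 1 / (n + 1 : ℝ) ^ (1 + s) := by
    refine tsum_congr fun n ↦ ?_
    rw [hf, Real.rpow_neg (Nat.cast_nonneg _)]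
    push_cast
    simp
  have h6 : f 0 = 0 := by
    rw [hf]; simp only [Nat.cast_zero]; exact Real.zero_rpow (by linarith)
  rw [h5, h6]
  have h7 : 0 ≤ (1 + s) * ZetaAsymptotics.termTSum (1 + s) := by positivity
  simp only [add_sub_cancel_left] at h3
  linarith

theorem sum_range_le_neg_log {y : ℝ} (h0 : 0 ≤ y) (h1 : y < 1) (K : ℕ) :
    ∑ k ∈ Finset.range K, y ^ (k + 1) / ((k : ℝ) + 1) ≤ -Real.log (1 - y) := by
  have h := Real.hasSum_pow_div_log_of_abs_lt_one (x := y) (by rwa [abs_of_nonneg h0])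
  exact sum_le_hasSum _ (fun i _ ↦ by positivity) h

theorem neg_log_le_sum_range {y : ℝ} (h0 : 0 ≤ y) (h1 : y < 1) (K : ℕ) :
    -Real.log (1 - y) ≤ ∑ k ∈ Finset.range K, y ^ (k + 1) / ((k : ℝ) + 1) +
      y ^ (K + 1) / ((K + 1) * (1 - y)) := by
  have h := Real.hasSum_pow_div_log_of_abs_lt_one (x := y) (by rwa [abs_of_nonneg h0])
  have h2 := h.summable.sum_add_tsum_nat_add K
  rw [h.tsum_eq] at h2
  rw [← h2]
  gcongr
  have hg : HasSum (fun i : ℕ ↦ y ^ i * (y ^ (K + 1) / (K + 1)))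
      ((1 - y)⁻¹ * (y ^ (K + 1) / (K + 1))) :=
    (hasSum_geometric_of_lt_one h0 h1).mul_right _
  have h3 : (1 - y)⁻¹ * (y ^ (K + 1) / (K + 1)) = y ^ (K + 1) / ((K + 1) * (1 - y)) := by
    have : 0 < 1 - y := by linarith
    field_simp
  rw [← h3, ← hg.tsum_eq]
  refine Summable.tsum_le_tsum (fun i ↦ ?_) ((summable_nat_add_iff K).2 h.summable) hg.summable
  rw [← mul_div_assoc, ← pow_add]
  have : i + K + 1 = i + (K + 1) := by ring
  rw [this]
  gcongr
  simp

/-- Euler product bound `∑_{n ≤ N} Λ(n)/(n^{1+s} log n) ≤ log (1 + 1/s)`: the left side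
truncates `-∑_{p ≤ N} log (1 - p^{-1-s})`. -/
theorem lzSum_le {s : ℝ} (hs : 0 < s) (N : ℕ) : lzSum s N ≤ Real.log (1 + 1 / s) := by
  have hy : ∀ p ∈ Nat.primesLE N, 0 ≤ (p : ℝ) ^ (-(1 + s)) ∧ (p : ℝ) ^ (-(1 + s)) < 1 := by
    intro p hp
    have hp1 : (1 : ℝ) < p := by exact_mod_cast Nat.one_lt_of_mem_primesLE hp
    exact ⟨by positivity, Real.rpow_lt_one_of_one_lt_of_neg hp1 (by linarith)⟩
  calc lzSum s N ≤ ∑ p ∈ Nat.primesLE N, -Real.log (1 - (p : ℝ) ^ (-(1 + s))) := by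
        rw [lzSum_eq]
        exact Finset.sum_le_sum fun p hp ↦ sum_range_le_neg_log (hy p hp).1 (hy p hp).2 _
    _ = Real.log (∏ p ∈ Nat.primesLE N, (1 - (p : ℝ) ^ (-(1 + s)))⁻¹) := by
        rw [Real.log_prod fun p hp ↦ inv_ne_zero (by linarith [(hy p hp).2])]
        exact Finset.sum_congr rfl fun p _ ↦ (Real.log_inv _).symm
    _ ≤ _ := by
        refine Real.log_le_log (Finset.prod_pos fun p hp ↦ inv_pos.2 (by linarith [(hy p hp).2])) ?_
        exact prod_euler_le hs N

/-! ### Mertens' theorem with the exact constant -/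

theorem sum_vonMangoldt_floor (N : ℕ) :
    ∑ n ∈ Finset.Ioc 0 N, ArithmeticFunction.vonMangoldt n * ((N / n : ℕ) : ℝ) =
      Real.log (N.factorial : ℝ) := by
  rw [← ArithmeticFunction.sum_Ioc_mul_zeta_eq_sum, ArithmeticFunction.vonMangoldt_mul_zeta]
  simp only [ArithmeticFunction.log_apply]
  induction N with
  | zero => simp
  | succ k ih =>
    rw [Finset.sum_Ioc_succ_top (by simp), ih, Nat.factorial_succ, Nat.cast_mul,
      Real.log_mul (by positivity) (by positivity), add_comm]

/-- `∑_{n ≤ m} Λ(n)/n ≥ log(m+1) - 1`. The `m + 1` makes the bound valid at every real point of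
`[m, m+1)`. -/
theorem le_lamSum {m : ℕ} (hm : 2 ≤ m) : Real.log (m + 1) - 1 ≤ lamSum m := by
  have hm2 : (2 : ℝ) ≤ m := by exact_mod_cast hm
  have hm0 : (0 : ℝ) < m := by linarith
  have h1 : Real.log (m.factorial : ℝ) ≤ m * lamSum m := by
    rw [← sum_vonMangoldt_floor, lamSum, Finset.mul_sum]
    refine Finset.sum_le_sum fun n _ ↦ ?_
    have h := Nat.cast_div_le (α := ℝ) (m := m) (n := n)
    calc _ ≤ ArithmeticFunction.vonMangoldt n * ((m : ℝ) / n) :=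
          mul_le_mul_of_nonneg_left h ArithmeticFunction.vonMangoldt_nonneg
      _ = _ := by ring
  have h2 := Stirling.le_log_factorial_stirling (n := m) (by lia)
  have h3 : Real.log (m + 1) ≤ Real.log m + 1 / m := by
    have : (m : ℝ) + 1 = m * (1 + 1 / m) := by field_simp
    rw [this, Real.log_mul hm0.ne' (by positivity)]
    have := Real.log_le_sub_one_of_pos (show (0 : ℝ) < 1 + 1 / m by positivity)
    linarith
  have h4 : Real.log 2 ≤ Real.log m := Real.log_le_log (by norm_num) hm2
  have h5 : Real.log 4 ≤ Real.log (2 * π) :=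
    Real.log_le_log (by norm_num) (by linarith [Real.pi_gt_three])
  have h6 : Real.log 4 = 2 * Real.log 2 := by
    rw [show (4 : ℝ) = 2 ^ 2 by norm_num, Real.log_pow]; norm_num
  have h7 := Real.log_two_gt_d9
  have h8 : m * Real.log (m + 1) ≤ m * Real.log m + 1 := by
    have := mul_le_mul_of_nonneg_left h3 hm0.le
    have e : (m : ℝ) * (Real.log m + 1 / m) = m * Real.log m + 1 := by field_simp
    linarith
  have h9 : m * (Real.log (m + 1) - 1) ≤ m * lamSum m := by nlinarith
  exact le_of_mul_le_mul_left h9 hm0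

theorem log_factorial_le {N : ℕ} (hN : 1 ≤ N) :
    Real.log (N.factorial : ℝ) ≤ N * Real.log N - N + Real.log N / 2 + 1 := by
  obtain ⟨k, rfl⟩ : ∃ k, N = k + 1 := ⟨N - 1, by lia⟩
  have h := Stirling.log_stirlingSeq'_antitone (Nat.zero_le k)
  simp only [Function.comp, Nat.succ_eq_add_one, zero_add] at h
  have hk : (0 : ℝ) < ((k + 1 : ℕ) : ℝ) := by positivity
  have h1 : Real.log (Real.exp 1 / √2) = 1 - Real.log 2 / 2 := by
    rw [Real.log_div (by positivity) (by positivity), Real.log_exp, Real.log_sqrt (by norm_num)]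
  rw [Stirling.log_stirlingSeq_formula, Stirling.stirlingSeq_one, h1,
    Real.log_mul (by norm_num) hk.ne', Real.log_div hk.ne' (by positivity), Real.log_exp] at h
  nlinarith

theorem lamSum_le {N : ℕ} (hN : 1 ≤ N) :
    lamSum N - Real.log N + 1 ≤ (Chebyshev.psi N + Real.log N / 2 + 1) / N := by
  have hN0 : (0 : ℝ) < N := by exact_mod_cast hN
  have h1 : N * lamSum N ≤ Real.log (N.factorial : ℝ) + Chebyshev.psi N := by
    rw [← sum_vonMangoldt_floor, lamSum, Finset.mul_sum, Chebyshev.psi, Nat.floor_natCast,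
      ← Finset.sum_add_distrib]
    refine Finset.sum_le_sum fun n hn ↦ ?_
    have hn0 : 0 < n := (Finset.mem_Ioc.1 hn).1
    have h : (N : ℝ) / n ≤ ((N / n : ℕ) : ℝ) + 1 := by
      have := (Nat.lt_floor_add_one ((N : ℝ) / n)).le
      rwa [Nat.floor_div_eq_div] at this
    calc _ = ArithmeticFunction.vonMangoldt n * ((N : ℝ) / n) := by ring
      _ ≤ ArithmeticFunction.vonMangoldt n * (((N / n : ℕ) : ℝ) + 1) :=
          mul_le_mul_of_nonneg_left h ArithmeticFunction.vonMangoldt_nonneg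
      _ = _ := by ring
  have h2 := log_factorial_le hN
  rw [le_div_iff₀ hN0]
  nlinarith

theorem wt_antitone {s a b : ℝ} (hs : 0 ≤ s) (ha : 1 < a) (hab : a ≤ b) : wt s b ≤ wt s a := by
  have h1 := Real.log_pos ha
  have h2 : Real.log a ≤ Real.log b := Real.log_le_log (by linarith) hab
  unfold wt
  gcongr ?_ / ?_
  exact Real.rpow_le_rpow_of_nonpos (by linarith) hab (by linarith)

theorem lzSum_sub_ge {s : ℝ} (hs : 0 ≤ s) {M M' : ℕ} (hM : 1 ≤ M) (hMM : M ≤ M') {t : ℝ}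
    (ht : (M' : ℝ) ≤ t) :
    (lamSum M' - lamSum M) * wt s t ≤ lzSum s M' - lzSum s M := by
  have hd : ∀ F : ℕ → ℝ, ∑ n ∈ Finset.Ioc 0 M', F n - ∑ n ∈ Finset.Ioc 0 M, F n =
      ∑ n ∈ Finset.Ioc M M', F n := by
    intro F
    rw [← Finset.sum_Ioc_consecutive F (Nat.zero_le M) hMM]; ring
  unfold lamSum lzSum
  rw [hd, hd, Finset.sum_mul]
  refine Finset.sum_le_sum fun n hn ↦ ?_
  obtain ⟨h1, h2⟩ := Finset.mem_Ioc.1 hn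
  have h3 : (1 : ℝ) < n := by exact_mod_cast (show 1 < n by lia)
  have h4 : (n : ℝ) ≤ t := le_trans (by exact_mod_cast h2) ht
  exact mul_le_mul_of_nonneg_left (wt_antitone hs h3 h4)
    (div_nonneg ArithmeticFunction.vonMangoldt_nonneg (Nat.cast_nonneg _))

/-- Summation by parts along the geometric grid `t_j = N^{j/K}`, `j ≥ K`. Only the lower bound
`∑_{n ≤ t} Λ(n)/n ≥ log t - 1` is used, and the main term is a tail of the logarithmic series
because `(log t_{j+1} - log t_j) / log t_j = 1/j`. -/
theorem lzSum_grid {s : ℝ} (hs : 0 ≤ s) {N K : ℕ} (hN : 2 ≤ N) (hK : 1 ≤ K) (i : ℕ) :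
    (lamSum ⌊Real.exp (Real.log N / K * (K + i : ℕ))⌋₊ - (Real.log N / K * (K + i : ℕ) - 1)) *
        wt s (Real.exp (Real.log N / K * (K + i : ℕ)))
      - (lamSum N - Real.log N + 1) * wt s N
      + ∑ j ∈ Finset.range i, Real.exp (-(s * (Real.log N / K))) ^ (K + j + 1) / ((K + j : ℕ) + 1)
    ≤ lzSum s ⌊Real.exp (Real.log N / K * (K + i : ℕ))⌋₊ - lzSum s N := by
  have hN2 : (2 : ℝ) ≤ N := by exact_mod_cast hN
  have hK0 : (0 : ℝ) < K := by exact_mod_cast hK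
  have hL : 0 < Real.log N := Real.log_pos (by linarith)
  set δ := Real.log N / K with hδ
  have hδ0 : 0 < δ := by positivity
  have hδK : δ * K = Real.log N := by rw [hδ]; field_simp
  have hNe : Real.exp (Real.log N) = N := Real.exp_log (by linarith)
  induction i with
  | zero => simp [hδK, hNe]; linarith
  | succ i ih =>
    set u := δ * ((K + i : ℕ) : ℝ) with hu
    have hu' : δ * ((K + (i + 1) : ℕ) : ℝ) = u + δ := by rw [hu]; push_cast; ring
    rw [hu']
    have huL : Real.log N ≤ u := by
      rw [hu, ← hδK]; push_cast; nlinarith [(Nat.cast_nonneg i : (0 : ℝ) ≤ i)]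
    have hNle : (N : ℝ) ≤ Real.exp u := by rw [← hNe]; exact Real.exp_le_exp.2 huL
    have hfl : N ≤ ⌊Real.exp u⌋₊ := Nat.le_floor hNle
    have hmono : Real.exp u ≤ Real.exp (u + δ) := Real.exp_le_exp.2 (by linarith)
    have h1 := lzSum_sub_ge hs (M := ⌊Real.exp u⌋₊) (M' := ⌊Real.exp (u + δ)⌋₊) (by lia)
      (Nat.floor_le_floor hmono) (Nat.floor_le (Real.exp_pos _).le)
    have h2 : wt s (Real.exp (u + δ)) ≤ wt s (Real.exp u) :=
      wt_antitone hs (by linarith) hmono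
    have h3 : u - 1 ≤ lamSum ⌊Real.exp u⌋₊ := by
      refine le_trans ?_ (le_lamSum (by lia))
      have := Real.log_le_log (Real.exp_pos u) (Nat.lt_floor_add_one (Real.exp u)).le
      rw [Real.log_exp] at this
      linarith
    have h4 : Real.exp (-(s * δ)) ^ (K + i + 1) / ((K + i : ℕ) + 1) =
        δ * wt s (Real.exp (u + δ)) := by
      unfold wt
      rw [Real.log_exp, ← Real.exp_mul, ← Real.exp_nat_mul]
      have e : u + δ = δ * ((K + i : ℕ) + 1) := by rw [hu]; ring
      rw [e]
      push_cast
      have e2 : δ * (↑K + ↑i + 1) * -s = (↑K + ↑i + 1) * -(s * δ) := by ring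
      rw [e2]
      have : (0 : ℝ) < K + i + 1 := by positivity
      field_simp
    rw [Finset.sum_range_succ, h4]
    nlinarith [mul_nonneg (sub_nonneg.2 h3) (sub_nonneg.2 h2)]

/-- The previous bound with the grid extended to infinity. -/
theorem lzSum_le_grid {s : ℝ} (hs : 0 < s) {N K : ℕ} (hN : 2 ≤ N) (hK : 1 ≤ K) :
    lzSum s N ≤ Real.log (1 + 1 / s) + (lamSum N - Real.log N + 1) / Real.log N +
      Real.log s + Real.log (Real.log N) + ((harmonic K : ℝ) - Real.log K) := by
  have hN2 : (2 : ℝ) ≤ N := by exact_mod_cast hN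
  have hK0 : (0 : ℝ) < K := by exact_mod_cast hK
  have hL : 0 < Real.log N := Real.log_pos (by linarith)
  have hE : 0 ≤ lamSum N - Real.log N + 1 := by
    have := le_lamSum hN
    have := Real.log_le_log (show (0 : ℝ) < N by linarith) (show (N : ℝ) ≤ N + 1 by linarith)
    linarith
  set a := s * (Real.log N / K) with ha
  have ha0 : 0 < a := by positivity
  set y := Real.exp (-a) with hy
  have hy0 : 0 < y := Real.exp_pos _
  have hy1 : y < 1 := by rw [hy, ← Real.exp_zero]; exact Real.exp_lt_exp.2 (by linarith)
  have hfin : ∀ i : ℕ, ∑ j ∈ Finset.range i, y ^ (K + j + 1) / (((K + j : ℕ) : ℝ) + 1) ≤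
      Real.log (1 + 1 / s) - lzSum s N + (lamSum N - Real.log N + 1) / Real.log N := by
    intro i
    have h1 := lzSum_grid hs.le hN hK i
    have h2 := lzSum_le hs ⌊Real.exp (Real.log N / K * (K + i : ℕ))⌋₊
    set u := Real.log N / K * ((K + i : ℕ) : ℝ) with hu
    have huL : Real.log N ≤ u := by
      have : Real.log N = Real.log N / K * K := by field_simp
      rw [hu]; push_cast
      have : 0 ≤ Real.log N / K * i := by positivity
      nlinarith
    have hNle : (N : ℝ) ≤ Real.exp u := by
      rw [← Real.exp_log (show (0 : ℝ) < N by linarith)]; exact Real.exp_le_exp.2 huL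
    have hfl : N ≤ ⌊Real.exp u⌋₊ := Nat.le_floor hNle
    have h3 : u - 1 ≤ lamSum ⌊Real.exp u⌋₊ := by
      refine le_trans ?_ (le_lamSum (by lia))
      have := Real.log_le_log (Real.exp_pos u) (Nat.lt_floor_add_one (Real.exp u)).le
      rw [Real.log_exp] at this
      linarith
    have h4 : 0 ≤ wt s (Real.exp u) := by
      unfold wt
      rw [Real.log_exp]
      exact div_nonneg (by positivity) (by linarith)
    have h5 : wt s N ≤ 1 / Real.log N := by
      unfold wt
      gcongr
      exact Real.rpow_le_one_of_one_le_of_nonpos (by linarith) (by linarith)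
    have h6 := mul_le_mul_of_nonneg_left h5 hE
    have h7 := mul_nonneg (sub_nonneg.2 h3) h4
    rw [mul_one_div] at h6
    linarith
  have hlog := Real.hasSum_pow_div_log_of_abs_lt_one (x := y) (by rwa [abs_of_nonneg hy0.le])
  have hsplit := hlog.summable.sum_add_tsum_nat_add K
  rw [hlog.tsum_eq] at hsplit
  have htail : ∑' i : ℕ, y ^ (i + K + 1) / (((i + K : ℕ) : ℝ) + 1) ≤
      Real.log (1 + 1 / s) - lzSum s N + (lamSum N - Real.log N + 1) / Real.log N := by
    refine Summable.tsum_le_of_sum_range_le ((summable_nat_add_iff K).2 hlog.summable) fun i ↦ ?_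
    refine le_of_eq_of_le (Finset.sum_congr rfl fun j _ ↦ ?_) (hfin i)
    rw [add_comm j K]
  have hhead : ∑ k ∈ Finset.range K, y ^ (k + 1) / ((k : ℝ) + 1) ≤ (harmonic K : ℝ) := by
    rw [harmonic]
    push_cast
    refine Finset.sum_le_sum fun k _ ↦ ?_
    rw [div_eq_mul_inv]
    exact mul_le_of_le_one_left (by positivity) (pow_le_one₀ hy0.le hy1.le)
  have h8 : Real.log (1 - y) ≤ Real.log s + Real.log (Real.log N) - Real.log K := by
    have : Real.log s + Real.log (Real.log N) - Real.log K = Real.log a := by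
      rw [ha, Real.log_mul hs.ne' (by positivity), Real.log_div hL.ne' hK0.ne']; ring
    rw [this]
    refine Real.log_le_log (by linarith) ?_
    have := Real.add_one_le_exp (-a)
    linarith
  linarith

/-- One-sided explicit form of Mertens' second theorem for prime powers, with the exact constant
`γ`: the limit `s → 0+` of the previous bound. -/
theorem lzSum_zero_le {N : ℕ} (hN : 2 ≤ N) :
    lzSum 0 N ≤ Real.log (Real.log N) + Real.eulerMascheroniConstant +
      (lamSum N - Real.log N + 1) / Real.log N := by
  have h1 : ∀ s : ℝ, 0 < s → lzSum s N ≤ s + (lamSum N - Real.log N + 1) / Real.log N +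
      Real.log (Real.log N) + Real.eulerMascheroniConstant := by
    intro s hs
    have h2 := Real.tendsto_harmonic_sub_log.const_add
      (Real.log (1 + 1 / s) + (lamSum N - Real.log N + 1) / Real.log N +
      Real.log s + Real.log (Real.log N))
    have h3 := ge_of_tendsto h2
      (Filter.eventually_atTop.2 ⟨1, fun K hK ↦ lzSum_le_grid hs hN hK⟩)
    have h4 : Real.log (1 + 1 / s) + Real.log s ≤ s := by
      rw [← Real.log_mul (by positivity) hs.ne', show (1 + 1 / s) * s = 1 + s by field_simp; ring]
      have := Real.log_le_sub_one_of_pos (show 0 < 1 + s by linarith)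
      ring_nf at this ⊢
      linarith
    linarith
  have hc : Continuous fun s : ℝ ↦ lzSum s N := by
    unfold lzSum wt
    refine continuous_finsetSum _ fun n hn ↦ ?_
    have hn0 : (n : ℝ) ≠ 0 := by exact_mod_cast (Finset.mem_Ioc.1 hn).1.ne'
    refine Continuous.mul continuous_const (Continuous.div_const ?_ _)
    exact Continuous.rpow continuous_const continuous_neg fun _ ↦ Or.inl hn0
  have hl : Filter.Tendsto (fun s : ℝ ↦ lzSum s N) (nhdsWithin 0 (Set.Ioi 0)) (nhds (lzSum 0 N)) :=
    (hc.tendsto 0).mono_left nhdsWithin_le_nhds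
  have hr : Filter.Tendsto (fun s : ℝ ↦ s + (lamSum N - Real.log N + 1) / Real.log N +
      Real.log (Real.log N) + Real.eulerMascheroniConstant) (nhdsWithin 0 (Set.Ioi 0))
      (nhds (0 + (lamSum N - Real.log N + 1) / Real.log N +
      Real.log (Real.log N) + Real.eulerMascheroniConstant)) := by
    refine Filter.Tendsto.mono_left ?_ nhdsWithin_le_nhds
    exact (((continuous_id.add continuous_const).add continuous_const).add
      continuous_const).tendsto 0
  have := le_of_tendsto_of_tendsto hl hr
    (Filter.eventually_of_mem self_mem_nhdsWithin fun s hs ↦ h1 s hs)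
  linarith

/-! ### The Mertens product and the totient of a primorial -/

/-- The Mertens product `∏_{p ≤ N} (1 - 1/p)⁻¹`. -/
noncomputable def mertensProd (N : ℕ) : ℝ := ∏ p ∈ Nat.primesLE N, (1 - (p : ℝ)⁻¹)⁻¹

/-- `∏_{p ≤ N} (p - 1)`, the totient of the primorial of `N`. -/
def totPrimorial (N : ℕ) : ℕ := ∏ p ∈ Nat.primesLE N, (p - 1)

theorem prime_inv_bounds {N p : ℕ} (hp : p ∈ Nat.primesLE N) :
    (2 : ℝ) ≤ p ∧ 0 < (p : ℝ)⁻¹ ∧ (p : ℝ)⁻¹ ≤ 1 / 2 := by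
  have h : (2 : ℝ) ≤ p := by exact_mod_cast Nat.two_le_of_mem_primesLE hp
  refine ⟨h, by positivity, ?_⟩
  rw [one_div]
  exact inv_anti₀ (by norm_num) h

theorem mertensProd_pos (N : ℕ) : 0 < mertensProd N :=
  Finset.prod_pos fun p hp ↦ inv_pos.2 (by linarith [(prime_inv_bounds hp).2.2])

theorem totPrimorial_pos (N : ℕ) : 0 < totPrimorial N :=
  Finset.prod_pos fun p hp ↦ by have := Nat.two_le_of_mem_primesLE hp; lia

theorem log_mertensProd (N : ℕ) :
    Real.log (mertensProd N) = ∑ p ∈ Nat.primesLE N, -Real.log (1 - (p : ℝ)⁻¹) := by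
  unfold mertensProd
  rw [Real.log_prod fun p hp ↦ inv_ne_zero (by linarith [(prime_inv_bounds hp).2.2])]
  exact Finset.sum_congr rfl fun p _ ↦ Real.log_inv _

theorem log_totPrimorial (N : ℕ) :
    Real.log (totPrimorial N) = Chebyshev.theta N - Real.log (mertensProd N) := by
  rw [log_mertensProd, Chebyshev.theta_eq_sum_primesLE_log, ← Finset.sum_sub_distrib]
  unfold totPrimorial
  push_cast
  rw [Real.log_prod]
  · refine Finset.sum_congr rfl fun p hp ↦ ?_
    obtain ⟨h1, h2, h3⟩ := prime_inv_bounds hp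
    have h4 : 1 ≤ p := by have := Nat.two_le_of_mem_primesLE hp; lia
    rw [Nat.cast_sub h4, sub_neg_eq_add, ← Real.log_mul (by positivity) (by linarith)]
    congr 1
    have : (p : ℝ) ≠ 0 := by positivity
    push_cast
    field_simp
  · intro p hp
    have := Nat.two_le_of_mem_primesLE hp
    exact_mod_cast (show p - 1 ≠ 0 by lia)

/-- The prime powers `p^k > N` with `p ≤ N` contribute at most `2/⌊√N⌋` to `log mertensProd N`. -/
theorem log_mertensProd_le {N : ℕ} (hN : 2 ≤ N) :
    Real.log (mertensProd N) ≤ lzSum 0 N + 2 / Nat.sqrt N := by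
  have hN0 : (0 : ℝ) < N := by exact_mod_cast (show 0 < N by lia)
  have hr : 0 < Nat.sqrt N := Nat.sqrt_pos.2 (by lia)
  have hr0 : (0 : ℝ) < Nat.sqrt N := by exact_mod_cast hr
  set e : ℕ → ℝ := fun n ↦ if n ≤ Nat.sqrt N then 1 / (N : ℝ) else ((n : ℝ) ^ 2)⁻¹ with he
  have he0 : ∀ n, 0 ≤ e n := by intro n; simp only [he]; split_ifs <;> positivity
  have h1 : Real.log (mertensProd N) ≤ lzSum 0 N + ∑ p ∈ Nat.primesLE N, e p := by
    rw [log_mertensProd, lzSum_eq, ← Finset.sum_add_distrib]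
    refine Finset.sum_le_sum fun p hp ↦ ?_
    obtain ⟨h1, h2, h3⟩ := prime_inv_bounds hp
    have hy : (p : ℝ) ^ (-(1 + (0 : ℝ))) = (p : ℝ)⁻¹ := by rw [add_zero, Real.rpow_neg_one]
    rw [hy]
    refine (neg_log_le_sum_range h2.le (by linarith) (Nat.log p N)).trans ?_
    gcongr
    have hpp := Nat.prime_of_mem_primesLE hp
    have hK : 1 ≤ Nat.log p N :=
      Nat.log_pos hpp.one_lt (Nat.le_of_mem_primesLE hp)
    have hK1 : (1 : ℝ) ≤ Nat.log p N := by exact_mod_cast hK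
    have h4 : ((p : ℝ)⁻¹) ^ (Nat.log p N + 1) / ((Nat.log p N + 1) * (1 - (p : ℝ)⁻¹)) ≤
        ((p : ℝ)⁻¹) ^ (Nat.log p N + 1) := by
      refine div_le_self (by positivity) ?_
      nlinarith
    refine h4.trans ?_
    simp only [he]
    split_ifs with hc
    · rw [inv_pow, one_div]
      refine inv_anti₀ hN0 ?_
      exact_mod_cast (Nat.lt_pow_succ_log_self hpp.one_lt N).le
    · rw [← inv_pow]
      exact pow_le_pow_of_le_one h2.le (by linarith) (by lia)
  have h2 : ∑ p ∈ Nat.primesLE N, e p ≤ ∑ n ∈ Finset.Ioc 0 N, e n := by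
    rw [Nat.primesLE_eq_filter_Ioc_zero]
    exact Finset.sum_le_sum_of_subset_of_nonneg (Finset.filter_subset _ _) fun n _ _ ↦ he0 n
  have h3 : ∑ n ∈ Finset.Ioc 0 N, e n =
      ∑ n ∈ Finset.Ioc 0 (Nat.sqrt N), e n + ∑ n ∈ Finset.Ioc (Nat.sqrt N) N, e n :=
    (Finset.sum_Ioc_consecutive e (Nat.zero_le _) (Nat.sqrt_le_self N)).symm
  have h4 : ∑ n ∈ Finset.Ioc 0 (Nat.sqrt N), e n = Nat.sqrt N / N := by
    rw [Finset.sum_congr rfl (g := fun _ ↦ 1 / (N : ℝ))]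
    · simp [div_eq_mul_inv]
    · intro n hn
      simp only [he, if_pos (Finset.mem_Ioc.1 hn).2]
  have h5 : ∑ n ∈ Finset.Ioc (Nat.sqrt N) N, e n ≤ (Nat.sqrt N : ℝ)⁻¹ - (N : ℝ)⁻¹ := by
    rw [Finset.sum_congr rfl (g := fun n : ℕ ↦ ((n : ℝ) ^ 2)⁻¹)]
    · exact sum_Ioc_inv_sq_le_sub hr.ne' (Nat.sqrt_le_self N)
    · intro n hn
      simp only [he, if_neg (not_le.2 (Finset.mem_Ioc.1 hn).1)]
  have h6 : (Nat.sqrt N : ℝ) / N ≤ (Nat.sqrt N : ℝ)⁻¹ := by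
    rw [div_le_iff₀ hN0, ← div_eq_inv_mul, le_div_iff₀ hr0]
    exact_mod_cast Nat.sqrt_le N
  have h7 : 0 < (N : ℝ)⁻¹ := by positivity
  have h8 : 2 / (Nat.sqrt N : ℝ) = 2 * (Nat.sqrt N : ℝ)⁻¹ := div_eq_mul_inv _ _
  linarith

/-! ### Numerical inequalities -/

/-- From `H_31 - log 32 < γ < H_64 - log 64`. -/
theorem exp_gamma_bounds : 1.73 ≤ Real.exp Real.eulerMascheroniConstant ∧
    Real.exp Real.eulerMascheroniConstant ≤ 1.8 := by
  have hl1 := Real.log_two_gt_d9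
  have hl2 := Real.log_two_lt_d9
  have h1 := Real.eulerMascheroniSeq_lt_eulerMascheroniConstant 31
  have h2 := Real.eulerMascheroniConstant_lt_eulerMascheroniSeq' 64
  have e1 : Real.eulerMascheroniSeq 31 = (harmonic 31 : ℝ) - 5 * Real.log 2 := by
    rw [Real.eulerMascheroniSeq]
    have : ((31 : ℕ) : ℝ) + 1 = 2 ^ 5 := by norm_num
    rw [this, Real.log_pow]; norm_num
  have e2 : Real.eulerMascheroniSeq' 64 = (harmonic 64 : ℝ) - 6 * Real.log 2 := by
    rw [Real.eulerMascheroniSeq', if_neg (by norm_num)]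
    have : ((64 : ℕ) : ℝ) = 2 ^ 6 := by norm_num
    rw [this, Real.log_pow]; norm_num
  have f1 : (4.0272 : ℝ) ≤ (harmonic 31 : ℝ) := by
    have h : ((40272 / 10000 : ℚ) : ℝ) ≤ (harmonic 31 : ℝ) := Rat.cast_le.2 <| by
      norm_num [harmonic, Finset.sum_range_succ]
    push_cast at h
    linarith
  have f2 : (harmonic 64 : ℝ) ≤ (4.744 : ℝ) := by
    have h : (harmonic 64 : ℝ) ≤ ((4744 / 1000 : ℚ) : ℝ) := Rat.cast_le.2 <| by
      norm_num [harmonic, Finset.sum_range_succ]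
    push_cast at h
    linarith
  set γ := Real.eulerMascheroniConstant
  have e2' : Real.exp (Real.log 2) = 2 := Real.exp_log (by norm_num)
  constructor
  · have h3 : Real.exp γ = 2 * (Real.exp ((γ - Real.log 2) / 2)) ^ 2 := by
      nth_rw 1 [← e2']
      rw [← Real.exp_nat_mul, ← Real.exp_add]; congr 1; push_cast; ring
    have h4 := Real.add_one_le_exp ((γ - Real.log 2) / 2)
    have h5 : 0.934 ≤ Real.exp ((γ - Real.log 2) / 2) := by linarith
    rw [h3]; nlinarith
  · have h3 : Real.exp γ * Real.exp (Real.log 2 - γ) = 2 := by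
      rw [← Real.exp_add]; simpa using e2'
    have h4 := Real.quadratic_le_exp_of_nonneg (x := Real.log 2 - γ) (by linarith)
    have h5 : 1.1125 ≤ Real.exp (Real.log 2 - γ) := by nlinarith
    nlinarith [Real.exp_pos γ]

theorem log_log_two_le : Real.log (Real.log 2) ≤ -0.366 := by
  have hl2 := Real.log_two_lt_d9
  have hl1 := Real.log_two_gt_d9
  have h0 : 0 < Real.log 2 := by linarith
  have h1 : Real.log (2 * Real.log 2 ^ 2) = Real.log 2 + 2 * Real.log (Real.log 2) := by
    rw [Real.log_mul (by norm_num) (by positivity), Real.log_pow]; norm_num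
  have h2 := Real.log_le_sub_one_of_pos (show 0 < 2 * Real.log 2 ^ 2 by positivity)
  nlinarith

/-- Convexity of `c - log c` leaves it bounded on the range allowed by Chebyshev's bounds on
`c = θ(N)/N`, which is all that is needed of `c`. -/
theorem chebyshev_range_ineq {c v : ℝ} (hc : 0.49 ≤ c) (hc2 : c ≤ 1.3864) (hv0 : 0 ≤ v)
    (hv : v ≤ c + 0.404) : v + 0.062 * v ^ 2 ≤ Real.log c + 2.032 := by
  have hc0 : 0 < c := by linarith
  have hl2 := Real.log_two_lt_d9
  rcases le_total c 0.75 with h | h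
  · have h1 := Real.one_sub_inv_le_log_of_pos (show (0 : ℝ) < 0.98 by norm_num)
    have h2 : Real.log 0.98 ≤ Real.log (2 * c) := Real.log_le_log (by norm_num) (by linarith)
    rw [Real.log_mul (by norm_num) hc0.ne'] at h2
    norm_num at h1 h2 h hc hv ⊢
    nlinarith
  rcases le_total c 1 with h' | h'
  · have h1 := Real.one_sub_inv_le_log_of_pos (show (0 : ℝ) < 0.75 by norm_num)
    have h2 : Real.log 0.75 ≤ Real.log c := Real.log_le_log (by norm_num) h
    norm_num at h1 h2 h hc hv ⊢
    nlinarith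
  · have h2 := Real.log_nonneg h'
    norm_num at hc2 hv ⊢
    nlinarith

theorem log_div_sqrt_le {N : ℕ} (hN : 8192 ≤ N) : Real.log N ≤ 0.0996 * √(N : ℝ) := by
  have hl1 := Real.log_two_gt_d9
  have hl2 := Real.log_two_lt_d9
  have hN' : (8192 : ℝ) ≤ N := by exact_mod_cast hN
  have he : Real.exp 2 ≤ 8192 := by
    have h := Real.exp_one_lt_d9
    have h2 : Real.exp 2 = Real.exp 1 ^ 2 := by rw [← Real.exp_nat_mul]; norm_num
    have h3 := Real.exp_pos 1
    rw [h2]; nlinarith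
  have h := Real.log_div_sqrt_antitoneOn (Set.mem_Ici.2 he) (Set.mem_Ici.2 (he.trans hN')) hN'
  simp only at h
  have h1 : Real.log (8192 : ℝ) = 13 * Real.log 2 := by
    rw [show (8192 : ℝ) = 2 ^ 13 by norm_num, Real.log_pow]; norm_num
  have h2 : (90.5 : ℝ) ≤ √8192 := Real.le_sqrt_of_sq_le (by norm_num)
  have h3 : Real.log (8192 : ℝ) / √8192 ≤ 0.0996 := by
    rw [h1, div_le_iff₀ (by linarith)]
    norm_num at h2 ⊢
    linarith
  have h4 : 0 < √(N : ℝ) := Real.sqrt_pos.2 (by linarith)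
  exact (div_le_iff₀ h4).1 (h.trans h3)

theorem exp_le_cubic {e : ℝ} (h0 : 0 ≤ e) (h1 : e ≤ 0.2) : Real.exp e ≤ 1 + e + 0.55 * e ^ 2 := by
  have h := Real.exp_bound' h0 (h1.trans (by norm_num)) (n := 3) (by norm_num)
  norm_num [Finset.sum_range_succ, Nat.factorial] at h
  norm_num at h1 ⊢
  nlinarith [mul_nonneg (sq_nonneg e) (sub_nonneg.2 h1)]

theorem log_8192_le {N : ℕ} (hN : 8192 ≤ N) : 9.01 ≤ Real.log N := by
  have hl1 := Real.log_two_gt_d9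
  have hN' : (8192 : ℝ) ≤ N := by exact_mod_cast hN
  have h1 : Real.log (8192 : ℝ) = 13 * Real.log 2 := by
    rw [show (8192 : ℝ) = 2 ^ 13 by norm_num, Real.log_pow]; norm_num
  have := Real.log_le_log (by norm_num) hN'
  norm_num at hl1 ⊢
  linarith

/-! ### Large primes -/

/-- Explicit Chebyshev and Mertens bounds for `N ≥ 8192`, with `c = θ(N)/N`. -/
theorem explicit_bounds {N : ℕ} (hN : 8192 ≤ N) :
    ∃ c : ℝ, Chebyshev.theta N = c * N ∧ 0.4916 ≤ c ∧ c ≤ 1.3863 ∧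
      Real.log N ≤ 0.001101 * N ∧
      Real.log (mertensProd N) ≤ Real.log (Real.log N) + Real.eulerMascheroniConstant +
        (c + 0.402) / Real.log N := by
  have hl1 := Real.log_two_gt_d9
  have hl2 := Real.log_two_lt_d9
  have hN' : (8192 : ℝ) ≤ N := by exact_mod_cast hN
  have hN0 : (0 : ℝ) < N := by linarith
  have hη := log_div_sqrt_le hN
  set q := √(N : ℝ) with hq
  have hqq : q * q = N := Real.mul_self_sqrt hN0.le
  have hq1 : 90.5 ≤ q := Real.le_sqrt_of_sq_le (by norm_num; linarith)
  have hq0 : 0 < q := by linarith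
  have hr : 0.98895 * q ≤ Nat.sqrt N := by
    have h1 : q < Nat.sqrt N + 1 := by
      rw [hq, Real.sqrt_lt' (by positivity)]
      have := Nat.lt_succ_sqrt N
      rw [pow_two]
      exact_mod_cast this
    norm_num at hq1 ⊢
    linarith
  have hr0 : (0 : ℝ) < Nat.sqrt N := by nlinarith
  have hLlow := log_8192_le hN
  have hlogN1 : Real.log ((N : ℝ) + 1) ≤ 2 * Real.log N := by
    rw [show 2 * Real.log (N : ℝ) = Real.log ((N : ℝ) ^ 2) by rw [Real.log_pow]; norm_num]
    exact Real.log_le_log (by linarith) (by nlinarith)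
  have hpsi := Chebyshev.psi_sub_theta_le (x := (N : ℝ)) (by linarith)
  have hθu := Chebyshev.theta_le_log4_mul_x hN0.le
  have hθl := Chebyshev.theta_ge N
  have hl4 : Real.log 4 = 2 * Real.log 2 := by
    rw [show (4 : ℝ) = 2 ^ 2 by norm_num, Real.log_pow]; norm_num
  have hm1 := log_mertensProd_le (N := N) (by lia)
  have hm2 := lzSum_zero_le (N := N) (by lia)
  have hm3 := lamSum_le (N := N) (by lia)
  rw [← hq] at hpsi hθl
  set L := Real.log N with hL
  have hL0 : 0 < L := by linarith
  set θ := Chebyshev.theta (N : ℝ) with hθ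
  set c := θ / N with hc
  have hcN : θ = c * N := by rw [hc]; field_simp
  have hLN : L ≤ 0.001101 * N := by rw [← hqq]; nlinarith
  have hqL : q * L ≤ 0.0996 * N := by rw [← hqq]; nlinarith
  have hc_up : c ≤ 1.3863 := by
    rw [hc, div_le_iff₀ hN0]
    norm_num at hl2 ⊢
    nlinarith
  have hc_lo : 0.4916 ≤ c := by
    rw [hc, le_div_iff₀ hN0]
    norm_num at hl1 hLN hqL ⊢
    nlinarith
  have hv1 : (Chebyshev.psi N + L / 2 + 1) / N ≤ c + 0.1999 := by
    rw [div_le_iff₀ hN0]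
    norm_num at hLN hqL ⊢
    nlinarith
  have hv2 : 2 / (Nat.sqrt N : ℝ) * L ≤ 0.2015 := by
    rw [div_mul_eq_mul_div, div_le_iff₀ hr0]
    norm_num at hη hr ⊢
    nlinarith
  refine ⟨c, hcN, hc_lo, hc_up, hLN, ?_⟩
  have h1 : (lamSum N - L + 1) / L + 2 / (Nat.sqrt N : ℝ) ≤ (c + 0.402) / L := by
    rw [le_div_iff₀ hL0, add_mul, div_mul_cancel₀ _ hL0.ne']
    norm_num at hv1 hv2 ⊢
    linarith
  linarith

/-- The primorial case for large `N`: the explicit Mertens bound gives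
`mertensProd N ≤ e^γ (log N + v + O(v²/log N))` with `v` slightly larger than `θ(N)/N`, while
`log log (totPrimorial N)` is `log N + log (θ(N)/N)` up to a small error. -/
theorem mertensProd_le_of_large {N : ℕ} (hN : 8192 ≤ N) :
    mertensProd N ≤ Real.exp Real.eulerMascheroniConstant *
      (Real.log (Real.log (totPrimorial N)) - Real.log (Real.log 2)) + 3 := by
  have hN' : (8192 : ℝ) ≤ N := by exact_mod_cast hN
  have hN0 : (0 : ℝ) < N := by linarith
  have hLlow := log_8192_le hN
  have hl4 : Real.log 4 = 2 * Real.log 2 := by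
    rw [show (4 : ℝ) = 2 ^ 2 by norm_num, Real.log_pow]; norm_num
  have hl2 := Real.log_two_lt_d9
  have hl1 := Real.log_two_gt_d9
  obtain ⟨c, hcN, hc_lo, hc_up, hLN, hP⟩ := explicit_bounds hN
  set L := Real.log N with hL
  have hL0 : 0 < L := by linarith
  set v := c + 0.402 with hv
  have hv0 : 0 < v := by norm_num at hc_lo hv ⊢; linarith
  have hv_up : v ≤ 1.7883 := by norm_num at hc_up hv ⊢; linarith
  have he : v / L ≤ 0.2 := by
    rw [div_le_iff₀ hL0]; norm_num at hLlow hv_up ⊢; linarith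
  have he0 : 0 ≤ v / L := by positivity
  obtain ⟨hg1, hg2⟩ := exp_gamma_bounds
  have hP2 : mertensProd N ≤
      Real.exp Real.eulerMascheroniConstant * (L + v + 0.062 * v ^ 2) := by
    rw [← Real.exp_log (mertensProd_pos N)]
    refine (Real.exp_le_exp.2 hP).trans ?_
    rw [Real.exp_add, Real.exp_add, Real.exp_log hL0, mul_comm L, mul_assoc]
    refine mul_le_mul_of_nonneg_left ?_ (Real.exp_pos _).le
    refine (mul_le_mul_of_nonneg_left (exp_le_cubic he0 he) hL0.le).trans ?_
    have h1 : L * (1 + v / L + 0.55 * (v / L) ^ 2) = L + v + v ^ 2 * (0.55 / L) := by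
      field_simp
    have h2 : 0.55 / L ≤ 0.062 := by
      rw [div_le_iff₀ hL0]; norm_num at hLlow ⊢; linarith
    rw [h1]
    nlinarith [mul_le_mul_of_nonneg_left h2 (sq_nonneg v)]
  have hlP : Real.log (mertensProd N) ≤ 0.4 * L := by
    have h1 := Real.log_le_sub_one_of_pos (show 0 < L / 4 by positivity)
    rw [Real.log_div hL0.ne' (by norm_num), hl4] at h1
    have h2 := Real.eulerMascheroniConstant_lt_two_thirds
    norm_num at hLlow he ⊢
    linarith
  have hΦ : (c - 0.0005) * N ≤ Real.log (totPrimorial N) := by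
    rw [log_totPrimorial, hcN]
    norm_num at hLN hlP ⊢
    linarith
  have hc' : 0.49 ≤ c - 0.0005 := by norm_num at hc_lo ⊢; linarith
  have hc'0 : 0 < c - 0.0005 := by linarith
  have hLL : Real.log (c - 0.0005) + L ≤ Real.log (Real.log (totPrimorial N)) := by
    rw [hL, ← Real.log_mul hc'0.ne' hN0.ne']
    exact Real.log_le_log (by positivity) hΦ
  have hfin := chebyshev_range_ineq hc' (by linarith) hv0.le (by norm_num at hv ⊢; linarith)
  have hl22 := log_log_two_le
  have hfin2 : L + v + 0.062 * v ^ 2 ≤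
      Real.log (Real.log (totPrimorial N)) - Real.log (Real.log 2) + 1.666 := by
    norm_num at hfin hl22 ⊢
    linarith
  have h3 := mul_le_mul_of_nonneg_left hfin2 (Real.exp_pos Real.eulerMascheroniConstant).le
  have h4 : Real.exp Real.eulerMascheroniConstant * 1.666 ≤ 3 := by
    norm_num at hg2 ⊢; linarith
  linarith

/-! ### Primes below `8192` -/

/-- Trial division by the primes below `100`, which decides primality below `101²`. -/
def isPrimeB (m : ℕ) : Bool :=
  2 ≤ m && [2, 3, 5, 7, 11, 13, 17, 19, 23, 29, 31, 37, 41, 43, 47, 53, 59, 61, 67, 71, 73, 79,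
    83, 89, 97].all fun q ↦ m % q != 0 || m == q

theorem isPrimeB_eq {m : ℕ} (hm : m < 10201) : isPrimeB m = true ↔ m.Prime := by
  have hq : ∀ q ∈ [2, 3, 5, 7, 11, 13, 17, 19, 23, 29, 31, 37, 41, 43, 47, 53, 59, 61, 67, 71, 73,
      79, 83, 89, 97], Nat.Prime q := by
    norm_num
  have hall : ∀ q < 101, q.Prime → q ∈ [2, 3, 5, 7, 11, 13, 17, 19, 23, 29, 31, 37, 41, 43, 47,
      53, 59, 61, 67, 71, 73, 79, 83, 89, 97] := by
    decide +kernel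
  simp only [isPrimeB, Bool.and_eq_true, decide_eq_true_eq, List.all_eq_true, Bool.or_eq_true,
    bne_iff_ne, beq_iff_eq]
  constructor
  · rintro ⟨h2, h⟩
    by_contra hnp
    have h3 := Nat.minFac_sq_le_self (by lia) hnp
    have h4 : m.minFac < 101 := by nlinarith
    have h5 := Nat.minFac_prime (show m ≠ 1 by lia)
    rcases h _ (hall _ h4 h5) with h6 | h6
    · exact h6 (Nat.mod_eq_zero_of_dvd (Nat.minFac_dvd m))
    · exact hnp (h6 ▸ h5)
  · refine fun hp ↦ ⟨hp.two_le, fun q hqm ↦ ?_⟩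
    by_cases hd : m % q = 0
    · exact Or.inr ((Nat.prime_dvd_prime_iff_eq (hq q hqm) hp).1 (Nat.dvd_of_mod_eq_zero hd)).symm
    · exact Or.inl hd

/-- The product of `f` over `[lo, lo + 2^d)`, by binary splitting. -/
def mulRange (f : ℕ → ℕ) : ℕ → ℕ → ℕ
  | 0, lo => f lo
  | d + 1, lo => mulRange f d lo * mulRange f d (lo + 2 ^ d)

theorem mulRange_eq (f : ℕ → ℕ) (d lo : ℕ) :
    mulRange f d lo = ∏ m ∈ Finset.Ico lo (lo + 2 ^ d), f m := by
  induction d generalizing lo with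
  | zero => simp [mulRange]
  | succ d ih =>
    rw [mulRange, ih, ih, Finset.prod_Ico_consecutive f (by lia) (by lia), pow_succ]
    congr 2; ring

/-- `∏ (p - 1)` over the primes `p < 2^d`. -/
def totProd (d : ℕ) : ℕ := mulRange (fun m ↦ if isPrimeB m then m - 1 else 1) d 0

/-- `∏ p` over the primes `p < 2^d`. -/
def primeProd (d : ℕ) : ℕ := mulRange (fun m ↦ if isPrimeB m then m else 1) d 0

theorem mulRange_prime_eq (g : ℕ → ℕ) {d : ℕ} (hd : d ≤ 13) :
    mulRange (fun m ↦ if isPrimeB m then g m else 1) d 0 =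
      ∏ p ∈ Nat.primesLE (2 ^ d - 1), g p := by
  have h1 : 2 ^ d ≤ 2 ^ 13 := Nat.pow_le_pow_right (by norm_num) hd
  have h2 : 0 < 2 ^ d := by positivity
  rw [mulRange_eq, ← Finset.prod_filter]
  refine Finset.prod_congr ?_ fun _ _ ↦ rfl
  ext m
  simp only [Finset.mem_filter, Finset.mem_Ico, Nat.mem_primesLE, zero_add]
  constructor
  · rintro ⟨⟨-, h3⟩, h4⟩
    exact ⟨by lia, (isPrimeB_eq (by lia)).1 h4⟩
  · rintro ⟨h3, h4⟩
    exact ⟨⟨by lia, by lia⟩, (isPrimeB_eq (by lia)).2 h4⟩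

theorem totPrimorial_mono {M N : ℕ} (h : M ≤ N) : totPrimorial M ≤ totPrimorial N := by
  unfold totPrimorial
  refine Finset.prod_le_prod_of_subset_of_one_le' ?_ fun p hp _ ↦ ?_
  · intro p hp
    rw [Nat.mem_primesLE] at hp ⊢
    exact ⟨hp.1.trans h, hp.2⟩
  · have := Nat.two_le_of_mem_primesLE hp; lia

theorem mertensProd_mono {M N : ℕ} (h : M ≤ N) : mertensProd M ≤ mertensProd N := by
  unfold mertensProd
  refine Finset.prod_le_prod_of_subset_of_one_le ?_ (fun p hp ↦ ?_) fun p hp _ ↦ ?_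
  · intro p hp
    rw [Nat.mem_primesLE] at hp ⊢
    exact ⟨hp.1.trans h, hp.2⟩
  · exact inv_nonneg.2 (by linarith [(prime_inv_bounds hp).2.2])
  · obtain ⟨_, h2, h3⟩ := prime_inv_bounds hp
    exact (one_le_inv₀ (by linarith)).2 (by linarith)

theorem mertensProd_mul_totPrimorial (N : ℕ) :
    mertensProd N * totPrimorial N = ∏ p ∈ Nat.primesLE N, (p : ℝ) := by
  unfold mertensProd totPrimorial
  push_cast
  rw [← Finset.prod_mul_distrib]
  refine Finset.prod_congr rfl fun p hp ↦ ?_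
  obtain ⟨h1, h2, h3⟩ := prime_inv_bounds hp
  have h4 : 1 ≤ p := by have := Nat.two_le_of_mem_primesLE hp; lia
  rw [Nat.cast_sub h4]
  have h5 : (p : ℝ) - 1 ≠ 0 := by linarith
  push_cast
  field_simp

theorem mertensProd_le_of_check {i N : ℕ} (hi : i ≤ 12) (hN : N < 2 ^ (i + 1))
    (h : 1000 * primeProd (i + 1) ≤ (3000 + 1199 * (i - 1)) * totProd (i + 1)) :
    mertensProd N ≤ 3 + 1.199 * ((i - 1 : ℕ) : ℝ) := by
  refine (mertensProd_mono (show N ≤ 2 ^ (i + 1) - 1 by lia)).trans ?_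
  have h1 := mertensProd_mul_totPrimorial (2 ^ (i + 1) - 1)
  have h2 : primeProd (i + 1) = ∏ p ∈ Nat.primesLE (2 ^ (i + 1) - 1), p :=
    mulRange_prime_eq (fun p ↦ p) (by lia)
  have h3 : totProd (i + 1) = totPrimorial (2 ^ (i + 1) - 1) :=
    mulRange_prime_eq (fun p ↦ p - 1) (by lia)
  rw [h2, h3] at h
  have h4 : (0 : ℝ) < totPrimorial (2 ^ (i + 1) - 1) := by exact_mod_cast totPrimorial_pos _
  rw [← Nat.cast_prod] at h1
  have h5 : (1000 : ℝ) * ((∏ p ∈ Nat.primesLE (2 ^ (i + 1) - 1), p : ℕ) : ℝ) ≤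
      (3000 + 1199 * ((i - 1 : ℕ) : ℝ)) * totPrimorial (2 ^ (i + 1) - 1) := by exact_mod_cast h
  rw [← h1] at h5
  refine le_of_mul_le_mul_right ?_ h4
  norm_num at h5 ⊢
  linarith

/-- A lower bound `2^(2^j)` for the totient of a primorial reduces the claim to a linear bound
in `j` for the Mertens product. -/
theorem mertensProd_le_of_bounds {N j : ℕ} (hΦ : 2 ^ 2 ^ j ≤ totPrimorial N)
    (hP : mertensProd N ≤ 3 + 1.199 * (j : ℝ)) :
    mertensProd N ≤ Real.exp Real.eulerMascheroniConstant *
      (Real.log (Real.log (totPrimorial N)) - Real.log (Real.log 2)) + 3 := by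
  have hl1 := Real.log_two_gt_d9
  have hl0 : 0 < Real.log 2 := by linarith
  have h1 : (2 : ℝ) ^ j * Real.log 2 ≤ Real.log (totPrimorial N) := by
    have h : ((2 ^ 2 ^ j : ℕ) : ℝ) ≤ totPrimorial N := by exact_mod_cast hΦ
    have h' := Real.log_le_log (by positivity) h
    push_cast at h'
    rw [Real.log_pow] at h'
    exact_mod_cast h'
  have h2 := Real.log_le_log (by positivity) h1
  rw [Real.log_mul (by positivity) hl0.ne', Real.log_pow] at h2
  obtain ⟨hg, -⟩ := exp_gamma_bounds
  -- `1.199 < 1.73 * log 2`: the gain of the right-hand side per squaring of the totient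
  have h3 : 1.199 ≤ Real.exp Real.eulerMascheroniConstant * Real.log 2 := by
    norm_num at hg hl1 ⊢
    nlinarith
  have h4 : (0 : ℝ) ≤ j := by positivity
  have h5 := mul_le_mul_of_nonneg_left h3 h4
  have h6 : Real.exp Real.eulerMascheroniConstant * (j * Real.log 2) ≤
      Real.exp Real.eulerMascheroniConstant *
      (Real.log (Real.log (totPrimorial N)) - Real.log (Real.log 2)) :=
    mul_le_mul_of_nonneg_left (by linarith) (Real.exp_pos _).le
  linarith

/-- The dyadic certificate: for `2^i ≤ N < 2^(i+1)` the first bound is used at `2^i` and the second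
at `2^(i+1)`. -/
theorem finite_check : ∀ i ∈ [3, 4, 5, 6, 7, 8, 9, 10, 11, 12],
    2 ^ 2 ^ (i - 1) ≤ totProd i ∧
      1000 * primeProd (i + 1) ≤ (3000 + 1199 * (i - 1)) * totProd (i + 1) := by
  decide +kernel

theorem mertensProd_le_of_mid {N : ℕ} (h8 : 8 ≤ N) (hN : N < 8192) :
    mertensProd N ≤ Real.exp Real.eulerMascheroniConstant *
      (Real.log (Real.log (totPrimorial N)) - Real.log (Real.log 2)) + 3 := by
  have hi3 : 3 ≤ Nat.log 2 N := Nat.le_log_of_pow_le (by norm_num) (by lia)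
  have hi12 : Nat.log 2 N < 13 := Nat.log_lt_of_lt_pow (by lia) (by lia)
  have hlo : 2 ^ Nat.log 2 N ≤ N := Nat.pow_log_le_self 2 (by lia)
  have hhi : N < 2 ^ (Nat.log 2 N + 1) := Nat.lt_pow_succ_log_self (by norm_num) N
  generalize Nat.log 2 N = i at *
  obtain ⟨h1, h2⟩ := finite_check i (by simp only [List.mem_cons]; lia)
  refine mertensProd_le_of_bounds (j := i - 1) ?_ (mertensProd_le_of_check (by lia) hhi h2)
  refine h1.trans ?_
  rw [show totProd i = totPrimorial (2 ^ i - 1) from mulRange_prime_eq (fun p ↦ p - 1) (by lia)]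
  exact totPrimorial_mono (by lia)

theorem mertensProd_le_of_prime {N : ℕ} (hN : N.Prime) (h3 : 3 ≤ N) :
    mertensProd N ≤ Real.exp Real.eulerMascheroniConstant *
      (Real.log (Real.log (totPrimorial N)) - Real.log (Real.log 2)) + 3 := by
  by_cases h8 : 8 ≤ N
  · rcases lt_or_ge N 8192 with h | h
    · exact mertensProd_le_of_mid h8 h
    · exact mertensProd_le_of_large h
  have p3 : Nat.primesLE 3 = {2, 3} := by decide +kernel
  have p5 : Nat.primesLE 5 = {2, 3, 5} := by decide +kernel
  have p7 : Nat.primesLE 7 = {2, 3, 5, 7} := by decide +kernel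
  interval_cases N
  · refine mertensProd_le_of_bounds (j := 0) ?_ ?_
    · simp [totPrimorial, p3]
    · norm_num [mertensProd, p3]
  · exact absurd hN (by norm_num)
  · refine mertensProd_le_of_bounds (j := 1) ?_ ?_
    · simp [totPrimorial, p5]
    · norm_num [mertensProd, p5]
  · exact absurd hN (by norm_num)
  · refine mertensProd_le_of_bounds (j := 2) ?_ ?_
    · simp [totPrimorial, p7]
    · norm_num [mertensProd, p7]

/-! ### Reduction to primorials -/

/-- Replacing a finite set by another of the same size, trading values `≤ m` for values `≥ m`,
increases the product. -/
theorem prod_le_prod_exchange {S T : Finset ℕ} (hc : S.card = T.card) {f : ℕ → ℝ} {m : ℝ}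
    (hm : 0 ≤ m) (hf : ∀ a ∈ S, 0 ≤ f a) (hS : ∀ a ∈ S, a ∉ T → f a ≤ m)
    (hT : ∀ b ∈ T, b ∉ S → m ≤ f b) : ∏ a ∈ S, f a ≤ ∏ b ∈ T, f b := by
  rw [← Finset.prod_inter_mul_prod_sdiff S T, ← Finset.prod_inter_mul_prod_sdiff T S,
    Finset.inter_comm T S]
  refine mul_le_mul_of_nonneg_left ?_
    (Finset.prod_nonneg fun a ha ↦ hf a (Finset.mem_inter.1 ha).1)
  have h1 : ∏ a ∈ S \ T, f a ≤ ∏ _a ∈ S \ T, m :=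
    Finset.prod_le_prod (fun a ha ↦ hf a (Finset.mem_sdiff.1 ha).1)
      fun a ha ↦ hS a (Finset.mem_sdiff.1 ha).1 (Finset.mem_sdiff.1 ha).2
  have h2 : ∏ _b ∈ T \ S, m ≤ ∏ b ∈ T \ S, f b :=
    Finset.prod_le_prod (fun _ _ ↦ hm)
      fun b hb ↦ hT b (Finset.mem_sdiff.1 hb).1 (Finset.mem_sdiff.1 hb).2
  rw [Finset.prod_const] at h1 h2
  rw [Finset.card_sdiff_comm hc] at h1
  exact h1.trans h2

theorem exists_primesLE_card {k : ℕ} (hk : 1 ≤ k) :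
    ∃ x : ℕ, x.Prime ∧ (Nat.primesLE x).card = k := by
  refine ⟨Nat.nth Nat.Prime (k - 1), Nat.prime_nth_prime _, ?_⟩
  rw [Nat.primesLE_card_eq_primeCounting, Nat.primeCounting, Nat.primeCounting',
    Nat.count_nth_succ_of_infinite Nat.infinite_setOfPred_prime]
  lia

/-- Among integers with a given number of prime factors, the primorial maximises `n/φ(n)` and
minimises `∏ (p - 1)`. -/
theorem exists_primorial_compare {n : ℕ} (hn : 3 ≤ n) :
    ∃ x : ℕ, x.Prime ∧ (n : ℝ) / Nat.totient n ≤ mertensProd x ∧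
      totPrimorial x ≤ Nat.totient n := by
  have hk : 1 ≤ n.primeFactors.card :=
    Finset.card_pos.2 (Nat.nonempty_primeFactors.2 (by lia))
  obtain ⟨x, hx, hcard⟩ := exists_primesLE_card hk
  have hpf : ∀ p ∈ n.primeFactors, (2 : ℝ) ≤ p := fun p hp ↦ by
    exact_mod_cast (Nat.prime_of_mem_primeFactors hp).two_le
  have hgt : ∀ p ∈ n.primeFactors, p ∉ Nat.primesLE x → (x : ℝ) ≤ p := fun p hp hpx ↦ by
    have hpp := Nat.prime_of_mem_primeFactors hp
    rw [Nat.mem_primesLE] at hpx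
    exact_mod_cast (show x ≤ p by by_contra h; exact hpx ⟨by lia, hpp⟩)
  have hle : ∀ p ∈ Nat.primesLE x, (p : ℝ) ≤ x := fun p hp ↦ by
    exact_mod_cast Nat.le_of_mem_primesLE hp
  have hx2 : (2 : ℝ) ≤ x := by exact_mod_cast hx.two_le
  have hn0 : (0 : ℝ) < n := by exact_mod_cast (show 0 < n by lia)
  have hφ : (0 : ℝ) < Nat.totient n := by exact_mod_cast Nat.totient_pos.2 (by lia)
  have hinv : ∀ {a b : ℝ}, 2 ≤ a → a ≤ b → (1 - b⁻¹)⁻¹ ≤ (1 - a⁻¹)⁻¹ := fun {a b} ha hab ↦ by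
    have h1 : b⁻¹ ≤ a⁻¹ := inv_anti₀ (by linarith) hab
    have h2 : a⁻¹ ≤ 2⁻¹ := inv_anti₀ (by norm_num) ha
    exact inv_anti₀ (by linarith) (by linarith)
  have hpos : ∀ {a : ℝ}, 2 ≤ a → 0 ≤ (1 - a⁻¹)⁻¹ := fun {a} ha ↦ by
    have h2 : a⁻¹ ≤ 2⁻¹ := inv_anti₀ (by norm_num) ha
    exact inv_nonneg.2 (by linarith)
  refine ⟨x, hx, ?_, ?_⟩
  · have h1 : (n : ℝ) / Nat.totient n = ∏ p ∈ n.primeFactors, (1 - (p : ℝ)⁻¹)⁻¹ := by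
      have h := congrArg (fun q : ℚ ↦ (q : ℝ)) (Nat.totient_eq_mul_prod_factors n)
      push_cast at h
      rw [Finset.prod_inv_distrib, h]
      rw [h] at hφ
      have := pos_of_mul_pos_right hφ hn0.le
      field_simp
    rw [h1]
    exact prod_le_prod_exchange hcard.symm (hpos hx2) (fun p hp ↦ hpos (hpf p hp))
      (fun p hp hpx ↦ hinv hx2 (hgt p hp hpx))
      (fun p hp _ ↦ hinv (prime_inv_bounds hp).1 (hle p hp))
  · have h1 : (totPrimorial x : ℝ) ≤ ∏ p ∈ n.primeFactors, ((p - 1 : ℕ) : ℝ) := by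
      unfold totPrimorial
      push_cast
      refine prod_le_prod_exchange (m := ((x - 1 : ℕ) : ℝ)) hcard (by positivity)
        (fun p hp ↦ by positivity) (fun p hp _ ↦ ?_) (fun p hp hpx ↦ ?_)
      · have : p ≤ x := Nat.le_of_mem_primesLE hp
        exact_mod_cast (show p - 1 ≤ x - 1 by lia)
      · have : x ≤ p := by exact_mod_cast hgt p hp hpx
        exact_mod_cast (show x - 1 ≤ p - 1 by lia)
    have h2 : totPrimorial x ≤ ∏ p ∈ n.primeFactors, (p - 1) := by exact_mod_cast h1
    refine h2.trans ?_
    have h3 := Nat.totient_mul_prod_primeFactors n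
    have h4 : ∏ p ∈ n.primeFactors, p ≤ n := Nat.le_of_dvd (by lia) (Nat.prod_primeFactors_dvd n)
    have h5 : 0 < ∏ p ∈ n.primeFactors, p := Nat.pos_of_ne_zero (Finset.prod_ne_zero_iff.2
      fun p hp ↦ (Nat.prime_of_mem_primeFactors hp).ne_zero)
    refine Nat.le_of_mul_le_mul_right (c := ∏ p ∈ n.primeFactors, p) ?_ h5
    rw [h3, mul_comm]
    exact Nat.mul_le_mul_right _ h4

/-- For every integer `n ≥ 3`, `n/φ(n) ≤ e^γ·log(log φ(n)) + (3 − e^γ·log(log 2))`,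
with equality for `n = 6`. -/
theorem stmt_0 :
    (∀ n : ℕ, 3 ≤ n →
      (n : ℝ) / (Nat.totient n : ℝ) ≤
        Real.exp Real.eulerMascheroniConstant * Real.log (Real.log (Nat.totient n)) +
          (3 - Real.exp Real.eulerMascheroniConstant * Real.log (Real.log 2))) ∧
    ((6 : ℕ) : ℝ) / (Nat.totient 6 : ℝ) =
      Real.exp Real.eulerMascheroniConstant * Real.log (Real.log (Nat.totient 6)) +
        (3 - Real.exp Real.eulerMascheroniConstant * Real.log (Real.log 2)) := by
  constructor
  · intro n hn
    obtain ⟨x, hx, hP, hΦ⟩ := exists_primorial_compare hn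
    have hl2 : 0 < Real.log 2 := Real.log_pos (by norm_num)
    have hexp := Real.exp_pos Real.eulerMascheroniConstant
    -- `φ(n)` is even, so the iterated logarithm is at least its value at `2`
    have hφ2 : 2 ≤ Nat.totient n :=
      Nat.le_of_dvd (Nat.totient_pos.2 (by lia)) (Nat.totient_even (by lia)).two_dvd
    have hbase : Real.log (Real.log 2) ≤ Real.log (Real.log (Nat.totient n)) :=
      Real.log_le_log hl2 (Real.log_le_log (by norm_num) (by exact_mod_cast hφ2))
    by_cases h3 : 3 ≤ x
    · have h1 := mertensProd_le_of_prime hx h3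
      have h2 : 2 ≤ totPrimorial x := by
        refine le_trans ?_ (totPrimorial_mono h3)
        have p3 : Nat.primesLE 3 = {2, 3} := by decide +kernel
        simp [totPrimorial, p3]
      have h2' : (2 : ℝ) ≤ totPrimorial x := by exact_mod_cast h2
      have h4 : Real.log (Real.log (totPrimorial x)) ≤ Real.log (Real.log (Nat.totient n)) :=
        Real.log_le_log (Real.log_pos (by linarith))
          (Real.log_le_log (by linarith) (by exact_mod_cast hΦ))
      have h5 := mul_le_mul_of_nonneg_left h4 hexp.le
      linarith
    · have hx2 : x = 2 := by have := hx.two_le; lia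
      have p2 : Nat.primesLE 2 = {2} := by decide +kernel
      have h1 : mertensProd x = 2 := by rw [hx2]; norm_num [mertensProd, p2]
      have h5 := mul_le_mul_of_nonneg_left hbase hexp.le
      linarith
  · have h : Nat.totient 6 = 2 := by decide +kernel
    rw [h]
    norm_num
end

section
/- For every integer n ≥ 211, one has n/φ(n) ≤ 3 · log(log φ(n)). -/
/-!
Put `L = log φ(n)`. The proof bounds `n/φ(n) = ∏_{p ∣ n} p/(p-1)` from above in terms of `L`.

*Linear bounds.* Since `∏_{p ∣ n} (p-1) ≤ φ(n)`, subtracting `l · log(p-1)` from each term of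
`log(n/φ(n)) = ∑_{p ∣ n} log(p/(p-1))` and adding `l · L` back can only increase the total. If `l`
is so large that `log(p/(p-1)) ≤ l · log(p-1)` for all primes `p > y`, only the primes up to `y`
contribute, and one obtains `log(n/φ(n)) ≤ W + l·L` with `W` depending on `y` and `l` alone
(`line_bound`). As `x ↦ exp(W + l·x) - 3 log x` is convex, the resulting inequality
`exp(W + l·L) ≤ 3 log L` holds on an interval as soon as it holds at both ends (`segment_bound`).
The choices `y = 11, 37, 512` settle `4.75 ≤ L ≤ 25`, `25 ≤ L ≤ 90` and `90 ≤ L ≤ 512`.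

*Large `L`.* For `L ≥ 512` take `y = ⌊L⌋`, `l = 1/(y log y)`; then `l·L` is at most `0.161`, and an
explicit form of Mertens' third theorem is needed for `∏_{p ≤ y} p/(p-1)`. The factorisation of
`N!` together with `θ(N) ≤ N log 4` gives `∑_{p ≤ N} log p / p ≤ log N + O(1)` with an explicit
constant (`sum_log_div_le`). Partial summation starting from `512`, where the sums are computed,
turns this into a bound for `∑_{p ≤ N} 1/p` (`sum_inv_le`), hence for the product. The constants
leave room because `e^γ` is much smaller than `3`.

*Small `n`.* The `y = 11` bound shows that `L ≥ 4.75` once `n ≥ 551` (`log_totient_ge`); the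
remaining `n` are checked by computing `φ(n)` (`totientTest_all`).
-/

open Real

/-! ### Numerical bounds for logarithms -/

/-- Lower bounds for `log x` by rational multiples of `log 2`, from `2 ^ j ≤ x ^ k`. -/
theorem log_lower {x c : ℝ} (j k : ℕ) (hk : 0 < k) (h : 2 ^ j ≤ x ^ k)
    (hc : c * k ≤ j * 0.6931471803) : c ≤ log x := by
  have h1 := log_le_log (by positivity) h
  rw [log_pow, log_pow] at h1
  have hk' : (0:ℝ) < k := by exact_mod_cast hk
  have := log_two_gt_d9
  have : (j:ℝ) * 0.6931471803 ≤ j * log 2 := by gcongr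
  nlinarith

theorem log_upper {x c : ℝ} (j k : ℕ) (hk : 0 < k) (hx : 0 < x) (h : x ^ k ≤ 2 ^ j)
    (hc : j * 0.6931471808 ≤ c * k) : log x ≤ c := by
  have h1 := log_le_log (by positivity) h
  rw [log_pow, log_pow] at h1
  have hk' : (0:ℝ) < k := by exact_mod_cast hk
  have := log_two_lt_d9
  have : (j:ℝ) * log 2 ≤ j * 0.6931471808 := by gcongr
  nlinarith

/-! ### Bounds for `log (n / φ n)` that are linear in `log (φ n)` -/

theorem prod_ratio (S : Finset ℕ) (hS : ∀ p ∈ S, p.Prime) :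
    ∑ p ∈ S, log ((p : ℝ) / (p - 1)) = log (((∏ p ∈ S, p : ℕ) : ℝ) / (∏ p ∈ S, (p - 1) : ℕ)) := by
  rw [← log_prod]
  · congr 1
    push_cast
    rw [← Finset.prod_div_distrib]
    refine Finset.prod_congr rfl fun p hp => ?_
    rw [Nat.cast_sub (hS p hp).one_le]; simp
  · intro p hp
    have : (2:ℝ) ≤ p := by exact_mod_cast (hS p hp).two_le
    have : (0:ℝ) < p - 1 := by linarith
    positivity

theorem log_ratio_eq {n : ℕ} (hn : n ≠ 0) :
    log ((n : ℝ) / n.totient) = ∑ p ∈ n.primeFactors, log ((p : ℝ) / (p - 1)) := by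
  rw [prod_ratio _ fun p hp => Nat.prime_of_mem_primeFactors hp]
  congr 1
  have h1 := Nat.totient_mul_prod_primeFactors n
  have h2 : 0 < n.totient := Nat.totient_pos.2 (Nat.pos_of_ne_zero hn)
  have h3 : 0 < ∏ p ∈ n.primeFactors, (p - 1) := Finset.prod_pos fun p hp => by
    have := (Nat.prime_of_mem_primeFactors hp).two_le
    omega
  rw [div_eq_div_iff (by positivity) (by positivity)]
  rw [mul_comm] at h1
  exact_mod_cast h1.symm

theorem sum_log_le_log_totient {n : ℕ} (hn : n ≠ 0) :
    ∑ p ∈ n.primeFactors, log ((p : ℝ) - 1) ≤ log n.totient := by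
  have h2 : 0 < n.totient := Nat.totient_pos.2 (Nat.pos_of_ne_zero hn)
  have h3 : 0 < ∏ p ∈ n.primeFactors, (p - 1) := Finset.prod_pos fun p hp => by
    have := (Nat.prime_of_mem_primeFactors hp).two_le
    omega
  have h4 : (∏ p ∈ n.primeFactors, (p - 1)) ≤ n.totient := by
    apply Nat.le_of_dvd h2
    rw [Nat.totient_eq_div_primeFactors_mul]
    exact dvd_mul_left _ _
  calc _ = ∑ p ∈ n.primeFactors, log ((p - 1 : ℕ) : ℝ) := by
        refine Finset.sum_congr rfl fun p hp => ?_
        rw [Nat.cast_sub (Nat.prime_of_mem_primeFactors hp).one_le]; simp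
    _ = log ((∏ p ∈ n.primeFactors, (p - 1) : ℕ) : ℝ) := by
        push_cast
        rw [log_prod]
        intro p hp
        have := (Nat.prime_of_mem_primeFactors hp).two_le
        have : p - 1 ≠ 0 := by omega
        exact_mod_cast this
    _ ≤ _ := log_le_log (by exact_mod_cast h3) (by exact_mod_cast h4)

/-- The linear bound. The weights `w p` for `p ≤ y` must be nonnegative, because the primes up to `y`
that do not divide `n` are included in the sum on the right. -/
theorem line_bound {n : ℕ} (hn : n ≠ 0) (y : ℕ) (l : ℝ) (hl : 0 ≤ l) (w : ℕ → ℝ)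
    (hw : ∀ p ∈ Nat.primesLE y, 0 ≤ w p ∧ log ((p : ℝ) / (p - 1)) ≤ w p + l * log ((p : ℝ) - 1))
    (hbig : ∀ p : ℕ, p.Prime → y < p → log ((p : ℝ) / (p - 1)) ≤ l * log ((p : ℝ) - 1)) :
    log ((n : ℝ) / n.totient) ≤ ∑ p ∈ Nat.primesLE y, w p + l * log n.totient := by
  have h1 : log ((n : ℝ) / n.totient) ≤
      ∑ p ∈ n.primeFactors, ((if p ≤ y then w p else 0) + l * log ((p : ℝ) - 1)) := by
    rw [log_ratio_eq hn]
    refine Finset.sum_le_sum fun p hp => ?_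
    have hp' := Nat.prime_of_mem_primeFactors hp
    split_ifs with h
    · exact (hw p (Nat.mem_primesLE.2 ⟨h, hp'⟩)).2
    · simpa using hbig p hp' (by omega)
  have h2 : ∑ p ∈ n.primeFactors, (if p ≤ y then w p else 0) ≤ ∑ p ∈ Nat.primesLE y, w p := by
    rw [← Finset.sum_filter]
    refine Finset.sum_le_sum_of_subset_of_nonneg ?_ fun p hp _ => (hw p hp).1
    intro p hp
    rw [Finset.mem_filter] at hp
    exact Nat.mem_primesLE.2 ⟨hp.2, Nat.prime_of_mem_primeFactors hp.1⟩
  have h3 := mul_le_mul_of_nonneg_left (sum_log_le_log_totient hn) hl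
  rw [Finset.sum_add_distrib, ← Finset.mul_sum] at h1
  linarith

theorem log_ratio_le {p : ℝ} (hp : 1 < p) : log (p / (p - 1)) ≤ 1 / (p - 1) := by
  have h : 0 < p - 1 := by linarith
  have := log_le_sub_one_of_pos (show 0 < p / (p - 1) by positivity)
  calc _ ≤ _ := this
    _ = _ := by field_simp; ring

theorem log_ratio_ge {p : ℝ} (hp : 1 < p) : 1 / p ≤ log (p / (p - 1)) := by
  have h : 0 < p - 1 := by linarith
  have := one_sub_inv_le_log_of_pos (show 0 < p / (p - 1) by positivity)
  calc _ = _ := by field_simp; ring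
    _ ≤ _ := this

/-- If `l ≥ 1 / (y log y)`, every prime above `y` satisfies the condition on large primes in
`line_bound`. -/
theorem log_ratio_le_mul_log {y p : ℕ} {l : ℝ} (hy : 2 ≤ y) (h : 1 ≤ l * (y * log y))
    (hp : y < p) : log ((p : ℝ) / (p - 1)) ≤ l * log ((p : ℝ) - 1) := by
  have hy' : (2:ℝ) ≤ y := by exact_mod_cast hy
  have hp' : (y:ℝ) + 1 ≤ p := by exact_mod_cast hp
  have hlog : 0 < log y := log_pos (by linarith)
  have hl : 0 < l := by
    by_contra hl
    push Not at hl
    nlinarith [mul_nonneg (show (0:ℝ) ≤ y by linarith) hlog.le]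
  refine (log_ratio_le (by linarith)).trans ?_
  rw [div_le_iff₀ (by linarith)]
  have h1 : log y ≤ log ((p:ℝ) - 1) := log_le_log (by linarith) (by linarith)
  have h2 : (y:ℝ) * log y ≤ ((p:ℝ) - 1) * log ((p:ℝ) - 1) :=
    mul_le_mul (by linarith) h1 hlog.le (by linarith)
  nlinarith

/-- `line_bound` with the weights `w p = log (p / (p - 1))`. The slope `l` is governed by `z`, which
may exceed `y` when there is no prime in `(y, z]`. -/
theorem line_bound' {n : ℕ} (hn : n ≠ 0) (y z : ℕ) (l : ℝ) (hz : 2 ≤ z)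
    (h : 1 ≤ l * (z * log z)) (hyz : ∀ p : ℕ, p.Prime → y < p → z < p) :
    log ((n : ℝ) / n.totient) ≤
      ∑ p ∈ Nat.primesLE y, log ((p : ℝ) / (p - 1)) + l * log n.totient := by
  have hl : 0 ≤ l := by
    by_contra hl
    push Not at hl
    have hz' : (2:ℝ) ≤ z := by exact_mod_cast hz
    nlinarith [mul_nonneg (show (0:ℝ) ≤ z by linarith) (log_nonneg (show (1:ℝ) ≤ z by linarith))]
  refine line_bound hn y l hl _ ?_ fun p hpp hp => log_ratio_le_mul_log hz h (hyz p hpp hp)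
  intro p hp
  have h2 : (2:ℝ) ≤ p := by exact_mod_cast (Nat.mem_primesLE.1 hp).2.two_le
  have h3 : 0 ≤ log ((p:ℝ) - 1) := log_nonneg (by linarith)
  refine ⟨log_nonneg ?_, by nlinarith [mul_nonneg hl h3]⟩
  rw [le_div_iff₀] <;> linarith

/-- A linear bound `W + l * x` implies the desired inequality on all of `[a, b]` if it does so at the
two ends, by convexity of `exp (W + l * x) - 3 * log x`; `A` and `B` are rational numbers separating
the two sides at the ends. -/
theorem segment_bound {W l a b x A B : ℝ} (ha : 0 < a) (hx : x ∈ Set.Icc a b)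
    (hA : W + l * a ≤ log A) (hA0 : 0 < A) (hA' : A ≤ 3 * log a)
    (hB : W + l * b ≤ log B) (hB0 : 0 < B) (hB' : B ≤ 3 * log b) :
    exp (W + l * x) ≤ 3 * log x := by
  have hconv : ConvexOn ℝ (Set.Ioi 0) fun x => exp (W + l * x) + -(3 * log x) := by
    refine ConvexOn.add ?_ ?_
    · have := convexOn_exp.comp_affineMap (AffineMap.lineMap (k := ℝ) W (W + l))
      refine (this.subset (Set.subset_univ _) (convex_Ioi 0)).congr fun x _ => ?_
      simp [AffineMap.lineMap_apply]; ring
    · exact (strictConcaveOn_log_Ioi.concaveOn.smul (by norm_num : (0:ℝ) ≤ 3)).neg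
  have := hconv.le_max_of_mem_Icc (x := a) (y := b) (z := x) ha
    (lt_of_lt_of_le ha (hx.1.trans hx.2)) hx
  have h1 : exp (W + l * a) ≤ A := (le_log_iff_exp_le hA0).1 hA
  have h2 : exp (W + l * b) ≤ B := (le_log_iff_exp_le hB0).1 hB
  have h3 := this.trans (max_le (c := 0) (by linarith) (by linarith))
  linarith

theorem ratio_le_of_log_le {n : ℕ} (hn : n ≠ 0) {t : ℝ} (h : log ((n : ℝ) / n.totient) ≤ t) :
    (n : ℝ) / n.totient ≤ exp t := by
  have h2 : 0 < n.totient := Nat.totient_pos.2 (Nat.pos_of_ne_zero hn)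
  have : 0 < n := Nat.pos_of_ne_zero hn
  exact (log_le_iff_le_exp (by positivity)).1 h

/-! ### Computations with the primes up to 512 -/

/-- A primality test, correct below `23 ^ 2 = 529`: `m ≥ 2`, and `m` is divisible by no prime up to
`19` other than itself. Unlike the decision procedure for `Nat.Prime` it evaluates quickly in the
kernel. -/
def sieved (m : ℕ) : Bool :=
  Nat.ble 2 m && [2, 3, 5, 7, 11, 13, 17, 19].all fun d => !(Nat.beq (m % d) 0) || Nat.beq m d

theorem prime_iff_sieved {m : ℕ} (hm : m < 529) : m.Prime ↔ sieved m = true := by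
  simp only [sieved, Bool.and_eq_true, Nat.ble_eq, List.all_eq_true, Bool.or_eq_true,
    Bool.not_eq_true', Nat.beq_eq]
  constructor
  · intro h
    refine ⟨h.two_le, fun d hd => ?_⟩
    by_cases hmd : m % d = 0
    · right
      have := (Nat.dvd_prime h).1 (Nat.dvd_of_mod_eq_zero hmd)
      rcases this with rfl | rfl
      · simp at hd
      · rfl
    · left
      rw [← Bool.not_eq_true, Nat.beq_eq]
      exact hmd
  · rintro ⟨h2, h⟩
    by_contra hp
    have hq := Nat.minFac_prime (show m ≠ 1 by omega)
    have hsq := Nat.minFac_sq_le_self (by omega) hp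
    have hdvd := Nat.minFac_dvd m
    generalize m.minFac = q at hq hsq hdvd
    have hq23 : q < 23 := by nlinarith
    have key : ∀ d ∈ [2, 3, 5, 7, 11, 13, 17, 19], d ∣ m → m = d := by
      intro d hd hdm
      rcases h d hd with h' | h'
      · rw [← Bool.not_eq_true, Nat.beq_eq] at h'
        exact absurd (Nat.mod_eq_zero_of_dvd hdm) h'
      · exact h'
    have hmem : q ∈ [2, 3, 5, 7, 11, 13, 17, 19] := by
      have := hq.two_le
      interval_cases q <;> first | (exfalso; revert hq; norm_num; done) | simp
    have hm := key q hmem hdvd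
    have := hq.two_le
    nlinarith

theorem primesLE_eq {N : ℕ} (hN : N < 528) :
    Nat.primesLE N = (Finset.range (N + 1)).filter fun m => sieved m = true := by
  refine Finset.filter_congr fun m hm => prime_iff_sieved ?_
  rw [Finset.mem_range] at hm
  omega
/-- The product of `p / (p - 1)` over the primes up to `512` is at most `11.21`. -/
theorem prod_primes_512 :
    (∏ p ∈ Nat.primesLE 512, p) * 100 ≤ 1121 * ∏ p ∈ Nat.primesLE 512, (p - 1) := by
  rw [primesLE_eq (by norm_num)]
  decide +kernel

/-- The product of `p / (p - 1)` over the primes up to `37` is at most `6.725`. -/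
theorem prod_primes_37 :
    (∏ p ∈ Nat.primesLE 37, p) * 1000 ≤ 6725 * ∏ p ∈ Nat.primesLE 37, (p - 1) := by
  rw [primesLE_eq (by norm_num)]
  decide +kernel

/-- An integer version of `∑ log p / p ≥ 7.12 * log 2` over the primes up to `512`: the number
`Nat.log2 (p ^ 16) / 16` is a lower approximation of the binary logarithm of `p`. -/
theorem sum_primes_512 :
    712 * 10 ^ 4 * 16 ≤ ∑ p ∈ Nat.primesLE 512, 10 ^ 6 * Nat.log2 (p ^ 16) / p := by
  rw [primesLE_eq (by norm_num)]
  decide +kernel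

theorem primesLE_eleven : Nat.primesLE 11 = {2, 3, 5, 7, 11} := by
  rw [primesLE_eq (by norm_num)]
  decide +kernel

/-! ### Computing the totient of small numbers -/

/-- The number of `k < m` coprime to `n`, in a form that the kernel evaluates fast. -/
def coprimeCount (n m : ℕ) : ℕ :=
  Nat.rec (motive := fun _ => ℕ) 0 (fun k c => Nat.add (Nat.beq (Nat.gcd n k) 1).toNat c) m

theorem totient_eq_coprimeCount (n : ℕ) : n.totient = coprimeCount n n := by
  have h : ∀ m, ((Finset.range m).filter n.Coprime).card = coprimeCount n m := by
    intro m
    induction m with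
    | zero => rfl
    | succ m ih =>
      have hs : coprimeCount n (m + 1) = (Nat.beq (Nat.gcd n m) 1).toNat + coprimeCount n m := rfl
      rw [Finset.range_add_one, Finset.filter_insert, hs, ← ih]
      by_cases hc : n.Coprime m
      · have h1 : Nat.beq (Nat.gcd n m) 1 = true := by rw [Nat.beq_eq]; exact hc
        rw [if_pos hc, h1, Finset.card_insert_of_notMem (by simp)]
        simp [add_comm]
      · have h1 : Nat.beq (Nat.gcd n m) 1 = false := by
          rw [← Bool.not_eq_true, Nat.beq_eq]; exact hc
        rw [if_neg hc, h1]
        simp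
  exact h n

/-- Either `n / f ≤ 4.375` and `f ≥ 74`, or `n / f ≤ 3.75` and `f ≥ 33`. With `f = φ n`, both
alternatives imply `n / f ≤ 3 * log (log f)`. -/
def totientTest (n f : ℕ) : Bool :=
  (Nat.ble (8 * n) (35 * f) && Nat.ble 74 f) || (Nat.ble (4 * n) (15 * f) && Nat.ble 33 f)

theorem totientTest_all :
    ∀ k < 340, totientTest (211 + k) (coprimeCount (211 + k) (211 + k)) = true := by
  decide +kernel

/-! ### Explicit Mertens estimates -/

theorem sum_primesLE_succ (f : ℕ → ℝ) (N : ℕ) :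
    ∑ p ∈ Nat.primesLE (N + 1), f p =
      ∑ p ∈ Nat.primesLE N, f p + if (N + 1).Prime then f (N + 1) else 0 := by
  simp only [Nat.primesLE, Nat.primesBelow, Finset.sum_filter]
  rw [Finset.sum_range_succ]

theorem log_factorial_le_s1 {n : ℕ} (hn : 1 ≤ n) :
    log n.factorial ≤ n * log n - n + log n + 1 := by
  induction n, hn using Nat.le_induction with
  | base => simp
  | succ n hn ih =>
    have hn' : (1:ℝ) ≤ n := by exact_mod_cast hn
    rw [Nat.factorial_succ, Nat.cast_mul, log_mul (by positivity) (by positivity)]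
    have h1 : 1 / ((n:ℝ) + 1) ≤ log (((n:ℝ) + 1) / n) := by
      have := log_ratio_ge (p := (n:ℝ) + 1) (by linarith)
      simpa using this
    rw [log_div (by positivity) (by positivity), div_le_iff₀ (by positivity)] at h1
    push_cast
    linarith

/-- The exponent of `p` in `n!` is at least `⌊n / p⌋`. -/
theorem sum_floor_mul_log_le (n : ℕ) :
    ∑ p ∈ Nat.primesLE n, ((n / p : ℕ) : ℝ) * log p ≤ log n.factorial := by
  have hdvd : ∏ p ∈ Nat.primesLE n, p ^ (n / p) ∣ n.factorial := by
    refine Finset.prod_dvd_of_isRelPrime ?_ ?_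
    · intro p hp q hq hpq
      rw [Function.onFun, ← Nat.coprime_iff_isRelPrime]
      exact Nat.Coprime.pow _ _
        ((Nat.coprime_primes (Nat.mem_primesLE.1 hp).2 (Nat.mem_primesLE.1 hq).2).2 hpq)
    · intro p hp
      have hp' := (Nat.mem_primesLE.1 hp).2
      have hpn := (Nat.mem_primesLE.1 hp).1
      rw [hp'.pow_dvd_iff_le_factorization n.factorial_ne_zero,
        Nat.factorization_factorial hp' (Nat.lt_succ_self _)]
      have hlog : 1 ≤ Nat.log p n := Nat.log_pos hp'.one_lt hpn
      have h1 : 1 ∈ Finset.Ico 1 (Nat.log p n).succ :=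
        Finset.mem_Ico.2 ⟨le_rfl, Nat.lt_succ_of_le hlog⟩
      have := Finset.single_le_sum (f := fun i => n / p ^ i) (fun _ _ => Nat.zero_le _) h1
      simpa using this
  have hle := Nat.le_of_dvd n.factorial_pos hdvd
  have hpos : 0 < ∏ p ∈ Nat.primesLE n, p ^ (n / p) :=
    Finset.prod_pos fun p hp => pow_pos (Nat.mem_primesLE.1 hp).2.pos _
  have h := log_le_log (by exact_mod_cast hpos)
    (show ((∏ p ∈ Nat.primesLE n, p ^ (n / p) : ℕ) : ℝ) ≤ n.factorial by exact_mod_cast hle)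
  push_cast at h
  rw [log_prod fun p hp => by
    have := (Nat.mem_primesLE.1 hp).2.pos
    positivity] at h
  simpa only [log_pow] using h

/-- An upper bound in Mertens' first theorem, from the logarithm of `n!` and Chebyshev's bound
`θ n ≤ n * log 4`, which controls the error made in replacing `⌊n / p⌋` by `n / p`. -/
theorem sum_log_div_le {n : ℕ} (hn : 1 ≤ n) :
    ∑ p ∈ Nat.primesLE n, log p / p ≤ log n - 1 + log 4 + (log n + 1) / n := by
  have hn' : (0:ℝ) < n := by exact_mod_cast hn
  have h1 := (sum_floor_mul_log_le n).trans (log_factorial_le_s1 hn)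
  have h2 : ∑ p ∈ Nat.primesLE n, log p ≤ log 4 * n := by
    have h := Chebyshev.theta_le_log4_mul_x hn'.le
    rw [Chebyshev.theta_eq_sum_primesLE_log] at h
    exact h
  have h3 : ∑ p ∈ Nat.primesLE n, (n * (log p / p) - log p) ≤
      ∑ p ∈ Nat.primesLE n, ((n / p : ℕ) : ℝ) * log p := by
    refine Finset.sum_le_sum fun p hp => ?_
    have hp' : 0 < p := (Nat.mem_primesLE.1 hp).2.pos
    have h4 : (n : ℝ) / p - 1 ≤ ((n / p : ℕ) : ℝ) := by
      have := Nat.lt_floor_add_one ((n : ℝ) / p)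
      rw [Nat.floor_div_eq_div] at this
      linarith
    have := mul_le_mul_of_nonneg_right h4 (log_natCast_nonneg p)
    calc _ = ((n : ℝ) / p - 1) * log p := by ring
      _ ≤ _ := this
  rw [Finset.sum_sub_distrib, ← Finset.mul_sum] at h3
  have h5 : (n:ℝ) * ∑ p ∈ Nat.primesLE n, log p / p ≤
      n * (log n - 1 + log 4 + (log n + 1) / n) := by
    have : (n:ℝ) * (log n - 1 + log 4 + (log n + 1) / n) =
      n * log n - n + log 4 * n + (log n + 1) := by field_simp
    rw [this]
    linarith
  exact (mul_le_mul_iff_right₀ hn').1 h5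

/-- Partial summation, starting at `M`: if `∑_{p ≤ K} log p / p - log K` never exceeds its value at
`K = M` by more than `E`, then `∑_{p ≤ N} 1 / p - log (log N)` exceeds its value at `M` by at most
`E / log M`. -/
theorem sum_inv_le {M N : ℕ} (hM : 2 ≤ M) (hMN : M ≤ N) {E : ℝ}
    (hE : ∀ K, M ≤ K → (∑ p ∈ Nat.primesLE K, log p / p) - log K -
      ((∑ p ∈ Nat.primesLE M, log p / p) - log M) ≤ E) :
    ∑ p ∈ Nat.primesLE N, 1 / (p : ℝ) ≤
      ∑ p ∈ Nat.primesLE M, 1 / (p : ℝ) + log (log N) - log (log M) + E / log M := by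
  -- The unused part of the allowance `E`, divided by `log N`, makes the claim inductive.
  suffices h : ∑ p ∈ Nat.primesLE N, 1 / (p : ℝ) +
      (E - ((∑ p ∈ Nat.primesLE N, log p / p) - log N -
        ((∑ p ∈ Nat.primesLE M, log p / p) - log M))) / log N ≤
      ∑ p ∈ Nat.primesLE M, 1 / (p : ℝ) + log (log N) - log (log M) + E / log M by
    have h1 := div_nonneg (sub_nonneg.2 (hE N hMN)) (log_natCast_nonneg N)
    linarith
  induction N, hMN using Nat.le_induction with
  | base => simp
  | succ N hMN ih =>
    have hN : (2:ℝ) ≤ N := by exact_mod_cast hM.trans hMN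
    have hu : 0 < log N := log_pos (by linarith)
    have huv : log N ≤ log ((N + 1 : ℕ) : ℝ) := log_le_log (by linarith) (by push_cast; linarith)
    have hD := hE N hMN
    have hv0 : ((N + 1 : ℕ) : ℝ) ≠ 0 := by positivity
    rw [sum_primesLE_succ (fun p => 1 / (p : ℝ)), sum_primesLE_succ (fun p => log p / (p : ℝ))]
    set v := log ((N + 1 : ℕ) : ℝ)
    set u := log (N : ℝ)
    set D := (∑ p ∈ Nat.primesLE N, log p / p)
    set D' := (∑ p ∈ Nat.primesLE M, log p / p) - log M
    have hv : 0 < v := hu.trans_le huv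
    have h1 : (E - (D - u - D')) / v ≤ (E - (D - u - D')) / u :=
      div_le_div_of_nonneg_left (sub_nonneg.2 hD) hu huv
    have h2 : 1 - u / v ≤ log v - log u := by
      rw [← log_div hv.ne' hu.ne']
      have := one_sub_inv_le_log_of_pos (show 0 < v / u by positivity)
      rwa [inv_div] at this
    have h3 : (E - (D + (if (N + 1).Prime then v / ((N + 1 : ℕ) : ℝ) else 0) - v - D')) / v =
        (E - (D - u - D')) / v + (1 - u / v) -
          if (N + 1).Prime then 1 / ((N + 1 : ℕ) : ℝ) else 0 := by
      split_ifs
      · field_simp; ring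
      · field_simp; ring
    rw [h3]
    linarith

/-- The difference `∑_{p ≤ N} (log (p / (p - 1)) - 1 / p)` grows by at most `1 / M - 1 / N` between `M`
and `N`, since each new term is at most `1 / (p - 1) - 1 / p`. -/
theorem sum_log_ratio_le {M N : ℕ} (hM : 2 ≤ M) (hMN : M ≤ N) :
    ∑ p ∈ Nat.primesLE N, log ((p : ℝ) / (p - 1)) - ∑ p ∈ Nat.primesLE N, 1 / (p : ℝ) + 1 / N ≤
    ∑ p ∈ Nat.primesLE M, log ((p : ℝ) / (p - 1)) - ∑ p ∈ Nat.primesLE M, 1 / (p : ℝ) + 1 / M := by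
  induction N, hMN using Nat.le_induction with
  | base => simp
  | succ N hMN ih =>
    have hN : (2:ℝ) ≤ N := by exact_mod_cast hM.trans hMN
    rw [sum_primesLE_succ (fun p => 1 / (p : ℝ)),
      sum_primesLE_succ (fun p => log ((p : ℝ) / (p - 1)))]
    have h1 := log_ratio_le (p := ((N + 1 : ℕ) : ℝ)) (by push_cast; linarith)
    have h2 : (((N + 1 : ℕ) : ℝ) - 1) = N := by push_cast; ring
    rw [h2] at h1 ⊢
    have h3 : 1 / ((N + 1 : ℕ) : ℝ) ≤ 1 / N :=
      one_div_le_one_div_of_le (by linarith) (by push_cast; linarith)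
    split_ifs <;> linarith

theorem log_512 : log 512 = 9 * log 2 := by
  rw [show (512:ℝ) = 2 ^ 9 by norm_num, log_pow]; norm_num

theorem sum_log_div_512_ge : 4.935 ≤ ∑ p ∈ Nat.primesLE 512, log p / (p : ℝ) := by
  have h1 : ∀ p ∈ Nat.primesLE 512, ((10 ^ 6 * Nat.log2 (p ^ 16) / p : ℕ) : ℝ) * log 2 ≤
      16 * 10 ^ 6 * (log p / (p : ℝ)) := by
    intro p hp
    have hp0 : 0 < p := (Nat.mem_primesLE.1 hp).2.pos
    have h2 : ((10 ^ 6 * Nat.log2 (p ^ 16) / p : ℕ) : ℝ) ≤ 10 ^ 6 * Nat.log2 (p ^ 16) / p := by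
      refine Nat.cast_div_le.trans ?_
      norm_num
    have h3 : (Nat.log2 (p ^ 16) : ℝ) * log 2 ≤ 16 * log p := by
      have h4 : 2 ^ Nat.log2 (p ^ 16) ≤ p ^ 16 := Nat.log2_self_le (by positivity)
      have h5 : ((2:ℝ) ^ Nat.log2 (p ^ 16)) ≤ (p:ℝ) ^ 16 := by exact_mod_cast h4
      have := log_le_log (by positivity) h5
      rw [log_pow, log_pow] at this
      exact_mod_cast this
    calc _ ≤ (10 ^ 6 * Nat.log2 (p ^ 16) / p : ℝ) * log 2 := by
          gcongr
      _ = 10 ^ 6 / p * (Nat.log2 (p ^ 16) * log 2) := by ring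
      _ ≤ 10 ^ 6 / p * (16 * log p) := by gcongr
      _ = _ := by ring
  have h6 := Finset.sum_le_sum h1
  rw [← Finset.sum_mul, ← Finset.mul_sum] at h6
  have h7 : (712 * 10 ^ 4 * 16 : ℝ) ≤
      ∑ p ∈ Nat.primesLE 512, ((10 ^ 6 * Nat.log2 (p ^ 16) / p : ℕ) : ℝ) := by
    exact_mod_cast sum_primes_512
  have := log_two_gt_d9
  have h8 := mul_le_mul_of_nonneg_right h7 (log_nonneg one_le_two)
  linarith

/-- The hypothesis of `sum_inv_le` for `M = 512`, with `E = 1.705`. -/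
theorem mertens_gap {K : ℕ} (hK : 512 ≤ K) :
    (∑ p ∈ Nat.primesLE K, log p / p) - log K -
      ((∑ p ∈ Nat.primesLE 512, log p / p) - log 512) ≤ 1.705 := by
  have hK' : (512:ℝ) ≤ K := by exact_mod_cast hK
  have h1 := sum_log_div_le (n := K) (by omega)
  have h2 := sum_log_div_512_ge
  have h3 := log_two_lt_d9
  have h4 : (log K + 1) / K ≤ 0.01415 := by
    have h5 := log_le_sub_one_of_pos (show (0:ℝ) < K / 512 by positivity)
    rw [log_div (by positivity) (by norm_num), log_512] at h5
    rw [div_le_iff₀ (by linarith)]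
    linarith
  rw [log_512]
  rw [log_four_eq] at h1
  linarith

theorem sum_log_ratio_le_log {y a b : ℕ} (ha : 0 < a)
    (h : (∏ p ∈ Nat.primesLE y, p) * a ≤ b * ∏ p ∈ Nat.primesLE y, (p - 1)) :
    ∑ p ∈ Nat.primesLE y, log ((p : ℝ) / (p - 1)) ≤ log ((b : ℝ) / a) := by
  rw [prod_ratio _ fun p hp => (Nat.mem_primesLE.1 hp).2]
  have h0 : 0 < ∏ p ∈ Nat.primesLE y, (p - 1) := Finset.prod_pos fun p hp => by
    have := (Nat.mem_primesLE.1 hp).2.two_le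
    omega
  have h0' : 0 < ∏ p ∈ Nat.primesLE y, p :=
    Finset.prod_pos fun p hp => (Nat.mem_primesLE.1 hp).2.pos
  generalize ∏ p ∈ Nat.primesLE y, (p - 1) = u at *
  generalize ∏ p ∈ Nat.primesLE y, p = v at *
  refine log_le_log (by positivity) ?_
  rw [div_le_div_iff₀ (by positivity) (by positivity)]
  exact_mod_cast h

theorem sum_log_ratio_37 : ∑ p ∈ Nat.primesLE 37, log ((p : ℝ) / (p - 1)) ≤ 1.907 :=
  (sum_log_ratio_le_log (by norm_num) prod_primes_37).trans
    (log_upper 11 4 (by norm_num) (by norm_num) (by norm_num) (by norm_num))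

theorem sum_log_ratio_512 : ∑ p ∈ Nat.primesLE 512, log ((p : ℝ) / (p - 1)) ≤ 2.43 :=
  (sum_log_ratio_le_log (by norm_num) prod_primes_512).trans
    (log_upper 7 2 (by norm_num) (by norm_num) (by norm_num) (by norm_num))

/-! ### The inequality in the various ranges of `log (φ n)` -/

/-- The case `y = 11` of `line_bound`. Here `l * log (p - 1)` is subtracted from the weights of the
small primes; `1.3657` is an upper bound for `log (2310 / 480) - 0.0336 * log 480`. -/
theorem line_11 {n : ℕ} (hn : n ≠ 0) :
    log ((n : ℝ) / n.totient) ≤ 1.3657 + 0.0336 * log n.totient := by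
  have h12 : 2.4837 ≤ log 12 :=
    log_lower 43 12 (by norm_num) (by norm_num) (by norm_num)
  have h := line_bound hn 11 0.0336 (by norm_num)
    (fun p => log ((p : ℝ) / (p - 1)) - 0.0336 * log ((p : ℝ) - 1)) (fun p hp => ⟨?_, by linarith⟩)
    (fun p hp hp' => log_ratio_le_mul_log (y := 12) (by norm_num) (by push_cast; linarith) ?_)
  · refine h.trans (add_le_add_left ?_ _)
    rw [Finset.sum_sub_distrib, ← Finset.mul_sum,
      prod_ratio _ fun p hp => (Nat.mem_primesLE.1 hp).2, primesLE_eleven]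
    have h1 : log ((2310 : ℝ) / 480) ≤ 1.573 :=
      log_upper 59 26 (by norm_num) (by norm_num) (by norm_num) (by norm_num)
    have h2 : 6.1723 ≤ log 480 := log_lower 187 21 (by norm_num) (by norm_num) (by norm_num)
    have h3 : ∑ p ∈ ({2, 3, 5, 7, 11} : Finset ℕ), log ((p : ℝ) - 1) = log 480 := by
      rw [show (480 : ℝ) = 2 * 4 * 6 * 10 by norm_num, log_mul (by norm_num) (by norm_num),
        log_mul (by norm_num) (by norm_num), log_mul (by norm_num) (by norm_num)]
      norm_num
      ring
    rw [h3, show ∏ p ∈ ({2, 3, 5, 7, 11} : Finset ℕ), p = 2310 by decide,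
      show ∏ p ∈ ({2, 3, 5, 7, 11} : Finset ℕ), (p - 1) = 480 by decide]
    push_cast
    linarith
  · have hp' := Nat.mem_primesLE.1 hp
    have h2 : (2:ℝ) ≤ p := by exact_mod_cast hp'.2.two_le
    have h11 : (p:ℝ) ≤ 11 := by exact_mod_cast hp'.1
    have h3 := log_ratio_ge (p := (p:ℝ)) (by linarith)
    have h4 : log ((p:ℝ) - 1) ≤ 2.4261 :=
      (log_le_log (by linarith) (show (p:ℝ) - 1 ≤ 10 by linarith)).trans
        (log_upper 7 2 (by norm_num) (by norm_num) (by norm_num) (by norm_num))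
    have h5 : 1 / (11:ℝ) ≤ 1 / p := one_div_le_one_div_of_le (by linarith) h11
    norm_num at h4 h5 ⊢
    norm_num at h3
    linarith
  · have : p ≠ 12 := by rintro rfl; revert hp; norm_num
    omega

theorem line_37 {n : ℕ} (hn : n ≠ 0) :
    log ((n : ℝ) / n.totient) ≤ 1.907 + 0.0068 * log n.totient := by
  have h40 : 3.686 ≤ log 40 :=
    log_lower 117 22 (by norm_num) (by norm_num) (by norm_num)
  refine (line_bound' hn 37 40 0.0068 (by norm_num) (by push_cast; linarith) ?_).trans
    (add_le_add_left sum_log_ratio_37 _)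
  intro p hp h
  by_contra h'
  have : p ≤ 40 := by omega
  interval_cases p <;> revert hp <;> norm_num

theorem line_512 {n : ℕ} (hn : n ≠ 0) :
    log ((n : ℝ) / n.totient) ≤ 2.43 + 0.00032 * log n.totient := by
  have h := log_two_gt_d9
  refine (line_bound' hn 512 512 0.00032 (by norm_num) ?_ fun _ _ h => h).trans
    (add_le_add_left sum_log_ratio_512 _)
  push_cast
  rw [log_512]
  linarith

theorem bound_of_large {n : ℕ} (hn : n ≠ 0) (hL : 512 ≤ log n.totient) :
    (n : ℝ) / n.totient ≤ 3 * log (log n.totient) := by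
  set L := log (n.totient : ℝ) with hLdef
  set N := ⌊L⌋₊ with hN
  have hN512 : 512 ≤ N := Nat.le_floor (by exact_mod_cast hL)
  have hN' : (512 : ℝ) ≤ N := by exact_mod_cast hN512
  have hNL : (N : ℝ) ≤ L := Nat.floor_le (by linarith)
  have hLN : L < N + 1 := Nat.lt_floor_add_one L
  have hl2 := log_two_gt_d9
  have hlogN : 6.238 ≤ log N := by
    have := log_le_log (by norm_num) hN'
    rw [log_512] at this
    linarith
  have hNlog : 0 < (N : ℝ) * log N := by positivity
  have h1 := line_bound' hn N N (1 / (N * log N)) (by omega)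
    (by rw [one_div_mul_cancel hNlog.ne']) fun _ _ h => h
  have h2 := sum_log_ratio_le (M := 512) (by norm_num) hN512
  have h3 := sum_inv_le (M := 512) (by norm_num) hN512 (fun K hK => mertens_gap hK)
  have h4 := sum_log_ratio_512
  have h5 : 1 / (N * log N) * L ≤ 0.161 := by
    rw [one_div_mul_eq_div, div_le_iff₀ hNlog]
    nlinarith
  have h6 : 1.705 / log ((512 : ℕ) : ℝ) ≤ 0.2735 := by
    push_cast
    rw [log_512, div_le_iff₀ (by linarith)]
    linarith
  have h7 : 1.8 ≤ log (log ((512 : ℕ) : ℝ)) := by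
    have h8 : 1.8 ≤ log 6.2 := log_lower 21 8 (by norm_num) (by norm_num) (by norm_num)
    refine h8.trans (log_le_log (by norm_num) ?_)
    push_cast
    rw [log_512]
    linarith
  have h9 : 1.097 ≤ log 3 := log_lower 19 12 (by norm_num) (by norm_num) (by norm_num)
  have h10 : 0 ≤ 1 / (N : ℝ) := by positivity
  have h11 : (1 : ℝ) / ((512 : ℕ) : ℝ) ≤ 0.002 := by norm_num
  have h12 : log ((n : ℝ) / n.totient) ≤ log (3 * log N) := by
    rw [log_mul (by norm_num) (by positivity)]
    linarith
  have h13 := ratio_le_of_log_le hn h12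
  rw [exp_log (by positivity)] at h13
  have h14 : log N ≤ log L := log_le_log (by linarith) hNL
  linarith

theorem bound_of_small {n : ℕ} (hn : 211 ≤ n) (hn' : n < 551) :
    (n : ℝ) / n.totient ≤ 3 * log (log n.totient) := by
  have h := totientTest_all (n - 211) (by omega)
  rw [show 211 + (n - 211) = n by omega, ← totient_eq_coprimeCount] at h
  have h2 : 0 < n.totient := Nat.totient_pos.2 (by omega)
  simp only [totientTest, Bool.or_eq_true, Bool.and_eq_true, Nat.ble_eq] at h
  generalize n.totient = f at *
  have hf : (0 : ℝ) < f := by exact_mod_cast h2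
  rcases h with ⟨h3, h4⟩ | ⟨h3, h4⟩
  · have h3' : (8 * n : ℝ) ≤ 35 * f := by exact_mod_cast h3
    have h4' : (74 : ℝ) ≤ f := by exact_mod_cast h4
    have h5 : 4.303 ≤ log 74 := log_lower 149 24 (by norm_num) (by norm_num) (by norm_num)
    have h6 : 1.4584 ≤ log 4.303 := log_lower 40 19 (by norm_num) (by norm_num) (by norm_num)
    have h7 := h5.trans (log_le_log (by norm_num) h4')
    have h8 := h6.trans (log_le_log (by norm_num) h7)
    rw [div_le_iff₀ hf]
    nlinarith
  · have h3' : (4 * n : ℝ) ≤ 15 * f := by exact_mod_cast h3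
    have h4' : (33 : ℝ) ≤ f := by exact_mod_cast h4
    have h5 : 3.494 ≤ log 33 := log_lower 121 24 (by norm_num) (by norm_num) (by norm_num)
    have h6 : 1.2502 ≤ log 3.494 := log_lower 83 46 (by norm_num) (by norm_num) (by norm_num)
    have h7 := h5.trans (log_le_log (by norm_num) h4')
    have h8 := h6.trans (log_le_log (by norm_num) h7)
    rw [div_le_iff₀ hf]
    nlinarith

theorem log_totient_ge {n : ℕ} (hn : 551 ≤ n) : 4.75 ≤ log n.totient := by
  have hn0 : n ≠ 0 := by omega
  have h1 := line_11 hn0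
  have h2 : (0 : ℝ) < n.totient := by exact_mod_cast Nat.totient_pos.2 (by omega)
  rw [log_div (by exact_mod_cast hn0) h2.ne'] at h1
  have h3 : 6.3076 ≤ log 550 := log_lower 91 10 (by norm_num) (by norm_num) (by norm_num)
  have h4 : log 550 ≤ log n := log_le_log (by norm_num) (by exact_mod_cast (by omega : 550 ≤ n))
  linarith

/-- For every integer `n ≥ 211`, `n/φ(n) ≤ 3·log(log φ(n))`. -/
theorem stmt_1 (n : ℕ) (hn : 211 ≤ n) :
    (n : ℝ) / (Nat.totient n : ℝ) ≤ 3 * Real.log (Real.log (Nat.totient n)) := by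
  have hn0 : n ≠ 0 := by omega
  rcases lt_or_ge n 551 with h | h
  · exact bound_of_small hn h
  have hL := log_totient_ge h
  have h25 : 3.218 ≤ log 25 := log_lower 65 14 (by norm_num) (by norm_num) (by norm_num)
  have h90 : 4.496 ≤ log 90 := log_lower 240 37 (by norm_num) (by norm_num) (by norm_num)
  have h9_6 : 2.26 ≤ log 9.6 := log_lower 75 23 (by norm_num) (by norm_num) (by norm_num)
  have h13_4 : 2.5917 ≤ log 13.4 := log_lower 86 23 (by norm_num) (by norm_num) (by norm_num)
  -- The numbers `4.66, 9.6, 13.4, 18` below lie between the two sides at `4.75, 25, 90, 512`.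
  rcases le_total (log n.totient) 25 with h1 | h1
  · have h4_75 : 1.5543 ≤ log 4.75 := log_lower 74 33 (by norm_num) (by norm_num) (by norm_num)
    have h4_66 : 1.5369 ≤ log 4.66 := log_lower 51 23 (by norm_num) (by norm_num) (by norm_num)
    refine (ratio_le_of_log_le hn0 (line_11 hn0)).trans ?_
    apply segment_bound (a := 4.75) (b := 25) (A := 4.66) (B := 9.6) (by norm_num) ⟨hL, h1⟩ <;>
      linarith
  rcases le_total (log n.totient) 90 with h2 | h2
  · refine (ratio_le_of_log_le hn0 (line_37 hn0)).trans ?_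
    apply segment_bound (a := 25) (b := 90) (A := 9.6) (B := 13.4) (by norm_num) ⟨h1, h2⟩ <;>
      linarith
  rcases le_total (log n.totient) 512 with h3 | h3
  · have h18 : 2.888 ≤ log 18 := log_lower 25 6 (by norm_num) (by norm_num) (by norm_num)
    have h512 := log_512
    have := log_two_gt_d9
    refine (ratio_le_of_log_le hn0 (line_512 hn0)).trans ?_
    apply segment_bound (a := 90) (b := 512) (A := 13.4) (B := 18) (by norm_num) ⟨h2, h3⟩ <;>
      linarith
  exact bound_of_large hn0 h3
end
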